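/- Let A = {a_n} ⊂ ℝ be a multiset such that μ_A = Σ_n δ_{a_n} is a temperate measure whose distributional Fourier transform is a pure point measure μ̂_A = Σ_{γ∈Γ} b_γ δ_γ satisfying Σ_{γ∈Γ, 0<γ<1} |b_γ|/γ < ∞ and log |μ̂_A|(B(0,r)) = O(r) as r → ∞. Then there exists a Dirichlet series Q(x) = Σ_{ω∈Ω} q_ω e^{2πi x ω} with q_ω ∈ ℂ, Σ_{ω∈Ω} |q_ω| < ∞, and Ω a bounded countable subset of ℝ, whose entire extension Q(z) = Σ_{ω∈Ω} q_ω e^{2πi z ω} has only real zeros and whose zero set, counted with multiplicities, is exactly A; i.e., the multiplicity of each zero a_n of Q equals the mass of μ_A at a_n. -/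

import Mathlib

open MeasureTheory Metric Filter Topology Complex SchwartzMap Bornology
open scoped ENNReal

noncomputable section

/-- A continuous function `g` is *Bohr almost periodic* if for every `ε > 0` its set of
`ε`-almost periods is relatively dense. -/
def IsBohrAP {V : Type*} [SeminormedAddCommGroup V] (g : V → ℂ) : Prop :=
  Continuous g ∧ ∀ ε : ℝ, 0 < ε → ∃ L : ℝ, 0 < L ∧ ∀ x : V, ∃ τ : V,
    dist τ x < L ∧ ∀ y : V, ‖g (y + τ) - g y‖ < ε

/-- A pure point complex measure on `V`, described by its (countably supported) mass function. -/
structure PPM (V : Type*) where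
  mass : V → ℂ
  countable : (Function.support mass).Countable

namespace PPM

variable {V : Type*}

/-- The total variation of a pure point measure, evaluated on a set. -/
def var (μ : PPM V) (A : Set V) : ℝ≥0∞ := ∑' x : A, (‖μ.mass x‖₊ : ℝ≥0∞)

/-- Pairing of a pure point measure with a test function: `∫ φ dμ = Σ_x μ{x}·φ(x)`. -/
def pair (μ : PPM V) (φ : V → ℂ) : ℂ := ∑' x, μ.mass x * φ x

/-- Convolution `(μ ⋆ ψ)(t) = ∫ ψ(t - x) dμ(x)`. -/
def conv [SubtractionMonoid V] (μ : PPM V) (ψ : V → ℂ) (t : V) : ℂ :=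
  ∑' x, μ.mass x * ψ (t - x)

end PPM

/-- Local finiteness of a pure point measure on `ℝ`. -/
def PPM.locFinite (μ : PPM ℝ) : Prop := ∀ r : ℝ, μ.var (ball 0 r) < ⊤

/-- The measure is a temperate distribution: it pairs (absolutely) with every Schwartz
function. -/
def PPM.temperate (μ : PPM ℝ) : Prop :=
  ∀ φ : SchwartzMap ℝ ℂ, Summable fun x => μ.mass x * φ x

/-- `ν` is the distributional Fourier transform of `μ`: `μ(φ̂) = ν(φ)` on test functions. -/
def IsFT (μ ν : PPM ℝ) : Prop :=
  ∀ φ : SchwartzMap ℝ ℂ, HasCompactSupport φ →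
    μ.pair ⇑(FourierTransform.fourierCLE ℂ (SchwartzMap ℝ ℂ) φ) = ν.pair ⇑φ

/-- The measure is integer-valued: `μ = Σ_n δ_{a_n}` for a multiset `A = {a_n}`, the mass of
each point being its multiplicity. -/
def PPM.natValued (μ : PPM ℝ) : Prop := ∀ x : ℝ, ∃ k : ℕ, μ.mass x = k

/-- The value at `z ∈ ℂ` of (the entire extension of) the Dirichlet series
`Σ_ω q_ω e^{2πi z ω}`. -/
def dserC (q : ℕ → ℂ) (ω : ℕ → ℝ) (z : ℂ) : ℂ :=
  ∑' i : ℕ, q i * Complex.exp (2 * Real.pi * Complex.I * z * (ω i : ℂ))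

/-- `μ` is the counting measure of the zero multiset of the entire function `Q`: the mass of
`μ` at each real point `x` is the multiplicity of `x` as a zero of `Q`. -/
def IsZeroCounting (Q : ℂ → ℂ) (μ : PPM ℝ) : Prop :=
  ∀ x : ℝ, ∃ (k : ℕ) (g : ℂ → ℂ), μ.mass x = k ∧ (∀ z, AnalyticAt ℂ g z) ∧ g x ≠ 0 ∧
    ∀ z : ℂ, Q z = (z - (x : ℂ)) ^ k * g z


/-! ### Part A: the genus one canonical product -/

/-- genus one elementary factor -/
def E1 (w : ℂ) : ℂ := (1 - w) * Complex.exp w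

lemma E1_sub_one_le {w : ℂ} (hw : ‖w‖ ≤ 1) : ‖E1 w - 1‖ ≤ 3 * ‖w‖ ^ 2 := by
  have h : E1 w - 1 = (Complex.exp w - 1 - w) - w * (Complex.exp w - 1) := by
    unfold E1; ring
  rw [h]
  have h1 := Complex.norm_exp_sub_one_sub_id_le hw
  have h2 := Complex.norm_exp_sub_one_le hw
  calc _ ≤ ‖Complex.exp w - 1 - w‖ + ‖w * (Complex.exp w - 1)‖ := norm_sub_le _ _
    _ ≤ ‖w‖ ^ 2 + ‖w‖ * (2 * ‖w‖) := by
        rw [norm_mul]; gcongr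
    _ = _ := by ring

lemma E1_norm_le (w : ℂ) : ‖E1 w‖ ≤ Real.exp (3 * ‖w‖ ^ 2) := by
  rcases le_total ‖w‖ 1 with hw | hw
  · have := E1_sub_one_le hw
    calc ‖E1 w‖ = ‖(E1 w - 1) + 1‖ := by ring_nf
      _ ≤ ‖E1 w - 1‖ + 1 := by simpa using norm_add_le (E1 w - 1) 1
      _ ≤ 3 * ‖w‖ ^ 2 + 1 := by linarith
      _ ≤ _ := Real.add_one_le_exp _
  · unfold E1
    rw [norm_mul]
    calc _ ≤ Real.exp ‖w‖ * Real.exp ‖w‖ := by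
          gcongr
          · calc ‖1 - w‖ ≤ ‖(1:ℂ)‖ + ‖w‖ := norm_sub_le _ _
              _ = ‖w‖ + 1 := by simp [add_comm]
              _ ≤ _ := Real.add_one_le_exp _
          · exact Complex.norm_exp_le_exp_norm w
      _ = Real.exp (2 * ‖w‖) := by rw [← Real.exp_add]; ring_nf
      _ ≤ _ := by
          apply Real.exp_le_exp.2
          nlinarith

lemma E1_diff : Differentiable ℂ E1 := by unfold E1; fun_prop

lemma E1_eq_zero {w : ℂ} : E1 w = 0 ↔ w = 1 := by
  unfold E1
  rw [mul_eq_zero, or_iff_left (Complex.exp_ne_zero w), sub_eq_zero, eq_comm]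

/-- canonical product -/
def CP {ι : Type*} (c : ι → ℝ) (z : ℂ) : ℂ := ∏' i, E1 (z / (c i : ℂ))

section CP
variable {ι : Type*} {c : ι → ℝ}

lemma cofin_le (hs : Summable fun i => 1 / (c i) ^ 2) (R : ℝ) :
    ∀ᶠ i in cofinite, R ^ 2 * (1 / (c i) ^ 2) ≤ 1 := by
  have h := (hs.mul_left (R ^ 2)).tendsto_cofinite_zero
  exact (h.eventually (gt_mem_nhds zero_lt_one)).mono fun i hi => hi.le

lemma CP_mult (hs : Summable fun i => 1 / (c i) ^ 2) (R : ℝ) :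
    MultipliableLocallyUniformlyOn (fun i (z : ℂ) => E1 (z / (c i : ℂ))) (ball 0 R) := by
  have := Summable.multipliableLocallyUniformlyOn_one_add (K := ball (0:ℂ) R)
    (f := fun i (z : ℂ) => E1 (z / (c i : ℂ)) - 1) (u := fun i => 3 * R ^ 2 * (1 / (c i) ^ 2))
    isOpen_ball (hs.mul_left _) ?_ ?_
  · simpa using this
  · filter_upwards [cofin_le hs R] with i hi z hz
    have hz' : ‖z‖ < R := by simpa using hz
    have h2 : ‖z / (c i : ℂ)‖ ^ 2 ≤ R ^ 2 * (1 / (c i) ^ 2) := by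
      rw [norm_div, div_pow, Complex.norm_real, Real.norm_eq_abs, sq_abs, div_eq_mul_one_div]
      gcongr
    have h3 : ‖z / (c i : ℂ)‖ ≤ 1 := by
      have := h2.trans hi
      exact (sq_le_one_iff₀ (norm_nonneg _)).1 this
    have := E1_sub_one_le h3
    linarith
  · intro i
    have : Continuous fun z : ℂ => E1 (z / (c i : ℂ)) := E1_diff.continuous.comp (by fun_prop)
    exact (this.sub continuous_const).continuousOn

lemma CP_multipliable (hs : Summable fun i => 1 / (c i) ^ 2) (z : ℂ) :
    Multipliable (fun i => E1 (z / (c i : ℂ))) :=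
  (CP_mult hs (‖z‖ + 1)).multipliable (by simp)

lemma CP_diff (hs : Summable fun i => 1 / (c i) ^ 2) : Differentiable ℂ (CP c) := by
  intro z
  have h := (CP_mult hs (‖z‖ + 1)).hasProdLocallyUniformlyOn
  have hd : DifferentiableOn ℂ (CP c) (ball 0 (‖z‖ + 1)) := by
    refine TendstoLocallyUniformlyOn.differentiableOn (φ := (atTop : Filter (Finset ι))) (F := fun s z => ∏ i ∈ s, E1 (z / (c i : ℂ))) ?_ ?_ isOpen_ball
    · exact h
    · refine Eventually.of_forall fun s => ?_
      have : Differentiable ℂ (fun z => ∏ i ∈ s, E1 (z / (c i : ℂ))) :=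
        Differentiable.fun_finsetProd fun i _ => E1_diff.comp (by fun_prop)
      exact this.differentiableOn
  exact hd.differentiableAt (isOpen_ball.mem_nhds (by simp))

lemma CP_ne_zero (hc : ∀ i, c i ≠ 0) (hs : Summable fun i => 1 / (c i) ^ 2) {z : ℂ}
    (hz : ∀ i, z ≠ c i) : CP c z ≠ 0 := by
  have := tprod_one_add_ne_zero_of_summable (f := fun i => E1 (z / (c i : ℂ)) - 1) ?_ ?_
  · simpa [CP] using this
  · intro i
    have hci : (c i : ℂ) ≠ 0 := by exact_mod_cast hc i
    simp only [add_sub_cancel, ne_eq, E1_eq_zero]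
    rw [div_eq_one_iff_eq hci]
    exact hz i
  · refine Summable.of_norm_bounded_eventually (g := fun i => 3 * ‖z‖ ^ 2 * (1 / (c i) ^ 2))
      (hs.mul_left _) ?_
    filter_upwards [cofin_le hs ‖z‖] with i hi
    have h2 : ‖z / (c i : ℂ)‖ ^ 2 = ‖z‖ ^ 2 * (1 / (c i) ^ 2) := by
      rw [norm_div, div_pow, Complex.norm_real, Real.norm_eq_abs, sq_abs, div_eq_mul_one_div]
    have h3 : ‖z / (c i : ℂ)‖ ≤ 1 := by
      rw [← h2] at hi
      exact (sq_le_one_iff₀ (norm_nonneg _)).1 hi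
    have := E1_sub_one_le h3
    rw [norm_norm]
    linarith

lemma CP_growth (hs : Summable fun i => 1 / (c i) ^ 2) (z : ℂ) :
    ‖CP c z‖ ≤ Real.exp (3 * (∑' i, 1 / (c i) ^ 2) * ‖z‖ ^ 2) := by
  have h := (CP_multipliable hs z).hasProd
  refine le_of_tendsto h.norm (Eventually.of_forall fun s => ?_)
  change ∏ i ∈ s, ‖E1 (z / (c i : ℂ))‖ ≤ _
  calc _ ≤ ∏ i ∈ s, Real.exp (3 * ‖z / (c i : ℂ)‖ ^ 2) :=
        Finset.prod_le_prod (fun _ _ => norm_nonneg _) (fun i _ => E1_norm_le _)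
    _ = Real.exp (3 * (∑ i ∈ s, 1 / (c i) ^ 2) * ‖z‖ ^ 2) := by
        rw [← Real.exp_sum]
        congr 1
        rw [Finset.mul_sum, Finset.sum_mul]
        refine Finset.sum_congr rfl fun i _ => ?_
        rw [norm_div, div_pow, Complex.norm_real, Real.norm_eq_abs, sq_abs]
        ring
    _ ≤ _ := by
        gcongr
        exact hs.sum_le_tsum s (fun i _ => by positivity)

lemma CP_conj (hs : Summable fun i => 1 / (c i) ^ 2) (z : ℂ) :
    CP c (starRingEnd ℂ z) = starRingEnd ℂ (CP c z) := by
  have h := (CP_multipliable hs z).hasProd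
  have h2 := h.map (starRingEnd ℂ) Complex.continuous_conj
  rw [CP, CP, ← h2.tprod_eq]
  congr 1
  ext i
  simp only [Function.comp, E1, map_mul, map_sub, map_one, map_div₀, Complex.conj_ofReal,
    ← Complex.exp_conj]

lemma logDeriv_factor {a : ℝ} (ha : a ≠ 0) {z : ℂ} (hz : z ≠ a) :
    logDeriv (fun z : ℂ => E1 (z / (a : ℂ))) z = 1 / (z - a) + 1 / a := by
  have ha' : (a : ℂ) ≠ 0 := by exact_mod_cast ha
  have hz' : z - a ≠ 0 := sub_ne_zero.2 hz
  have hd : HasDerivAt (fun z : ℂ => E1 (z / (a : ℂ)))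
      ((-(1 / (a:ℂ))) * Complex.exp (z / a) + (1 - z / a) * (Complex.exp (z / a) * (1 / a))) z := by
    unfold E1
    have h1 : HasDerivAt (fun z : ℂ => z / (a : ℂ)) (1 / a) z := (hasDerivAt_id z).div_const _
    exact (h1.const_sub 1).mul h1.cexp
  rw [logDeriv_apply, hd.deriv]
  unfold E1
  have he := Complex.exp_ne_zero (z / a)
  have h3 : 1 - z / a ≠ 0 := by
    intro h
    apply hz
    field_simp at h
    linear_combination -h
  have h4 : (a : ℂ) - z ≠ 0 := fun h => hz' (by linear_combination -h)
  field_simp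
  have h5 : z - a = -(a - z) := by ring
  rw [h5]
  field_simp
  ring

/-- bound on the logarithmic derivative terms -/
lemma term_bound {a s R : ℝ} (ha : a ≠ 0) (hs : 0 < s) {z : ℂ} (hz : s < z.im) (hzR : ‖z‖ < R) :
    ‖1 / (z - a) + 1 / (a : ℂ)‖ ≤ (2 * R + 4 * R ^ 2 / s) * (1 / a ^ 2) := by
  have ha' : (a : ℂ) ≠ 0 := by exact_mod_cast ha
  have him : s ≤ ‖z - a‖ := by
    have := Complex.abs_im_le_norm (z - a)
    simp at this
    exact hz.le.trans ((le_abs_self _).trans this)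
  have hz' : z - a ≠ 0 := by
    intro h; rw [h] at him; simp at him; linarith
  have hRpos : 0 < R := (norm_nonneg _).trans_lt hzR
  have e : 1 / (z - a) + 1 / (a : ℂ) = z / (a * (z - a)) := by field_simp; ring
  rw [e, norm_div, norm_mul, Complex.norm_real, Real.norm_eq_abs]
  have hapos : 0 < |a| := abs_pos.2 ha
  have hsq : a ^ 2 = |a| ^ 2 := (sq_abs a).symm
  rw [hsq]
  rw [div_le_iff₀ (by positivity)]
  have key : |a| ≤ (2 + 2 * R / s) * ‖z - a‖ := by
    rcases le_total |a| (2 * R) with h | h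
    · have : 2 * R = 2 * R / s * s := by field_simp
      have h2 : 2 * R / s * s ≤ 2 * R / s * ‖z - a‖ := by gcongr
      nlinarith [norm_nonneg (z - a)]
    · have h2 : |a| - ‖z‖ ≤ ‖z - a‖ := by
        have := norm_sub_norm_le (a : ℂ) z
        rw [norm_sub_rev, Complex.norm_real, Real.norm_eq_abs] at this
        exact this
      have h3 : 0 ≤ 2 * R / s * ‖z - a‖ := by positivity
      nlinarith
  calc ‖z‖ ≤ R := hzR.le
    _ = R / |a| * |a| := by field_simp
    _ ≤ R / |a| * ((2 + 2 * R / s) * ‖z - a‖) := by gcongr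
    _ ≤ _ := by
        have : (2 * R + 4 * R ^ 2 / s) * (1 / |a| ^ 2) * (|a| * ‖z - a‖)
          = R / |a| * ((2 + 4 * R / s) * ‖z - a‖) := by field_simp
        rw [this]
        gcongr
        norm_num

/-- derivative of the logarithmic derivative of the canonical product. -/
lemma CP_logDeriv (hc : ∀ i, c i ≠ 0) (hs : Summable fun i => 1 / (c i) ^ 2) {z : ℂ}
    (hz : 0 < z.im) : logDeriv (CP c) z = ∑' i, (1 / (z - c i) + 1 / (c i : ℂ)) := by
  have hne : ∀ i, z ≠ c i := fun i h => by rw [h] at hz; simp at hz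
  have hci : ∀ i, (c i : ℂ) ≠ 0 := fun i => by exact_mod_cast hc i
  have hld : ∀ i, logDeriv (fun z : ℂ => E1 (z / (c i : ℂ))) z = 1 / (z - c i) + 1 / (c i : ℂ) :=
    fun i => logDeriv_factor (hc i) (hne i)
  have := logDeriv_tprod_eq_tsum (s := ball (0:ℂ) (‖z‖ + 1)) isOpen_ball (x := z) (by simp)
    (f := fun i (z : ℂ) => E1 (z / (c i : ℂ))) ?_ ?_ ?_ (CP_mult hs _) (CP_ne_zero hc hs hne)
  · change logDeriv (fun x => ∏' i, E1 (x / (c i : ℂ))) z = _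
    rw [this]
    exact tsum_congr hld
  · intro i
    rw [Ne, E1_eq_zero, div_eq_one_iff_eq (hci i)]
    exact hne i
  · intro i
    exact (E1_diff.comp (by fun_prop : Differentiable ℂ fun z : ℂ => z / (c i : ℂ))).differentiableOn
  · simp_rw [hld]
    exact Summable.of_norm_bounded
      (hs.mul_left (2 * (‖z‖ + 1) + 4 * (‖z‖ + 1) ^ 2 / (z.im / 2)))
      fun i => term_bound (hc i) (by linarith) (by linarith) (by linarith)

lemma CP_logDeriv_deriv (hc : ∀ i, c i ≠ 0) (hs : Summable fun i => 1 / (c i) ^ 2) {z : ℂ}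
    (hz : 0 < z.im) : HasDerivAt (logDeriv (CP c)) (∑' i, (-1 / (z - c i) ^ 2)) z := by
  set U : Set ℂ := {w | z.im / 2 < w.im} ∩ ball 0 (‖z‖ + 1) with hU
  have hUo : IsOpen U := (isOpen_lt continuous_const Complex.continuous_im).inter isOpen_ball
  have hzU : z ∈ U := ⟨by simp; linarith, by simp⟩
  have hu := hs.mul_left (2 * (‖z‖ + 1) + 4 * (‖z‖ + 1) ^ 2 / (z.im / 2))
  have hne : ∀ w ∈ U, ∀ i, w - c i ≠ 0 := fun w hw i h => by
    have h2 := hw.1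
    rw [sub_eq_zero] at h
    rw [h] at h2; simp at h2; linarith
  have hdt : ∀ i, ∀ w ∈ U, HasDerivAt (fun w : ℂ => 1 / (w - c i) + 1 / (c i : ℂ))
      (-1 / (w - c i) ^ 2) w := by
    intro i w hw
    have h1 : HasDerivAt (fun w : ℂ => w - c i) 1 w := (hasDerivAt_id w).sub_const _
    have := (h1.inv (hne w hw i)).add_const (1 / (c i : ℂ))
    simpa [one_div] using this
  have hbd : ∀ i, ∀ w ∈ U, ‖1 / (w - c i) + 1 / (c i : ℂ)‖ ≤
      (2 * (‖z‖ + 1) + 4 * (‖z‖ + 1) ^ 2 / (z.im / 2)) * (1 / (c i) ^ 2) := by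
    intro i w hw
    exact term_bound (hc i) (by linarith) hw.1 (by simpa using hw.2)
  have hdo : ∀ i, DifferentiableOn ℂ (fun w : ℂ => 1 / (w - c i) + 1 / (c i : ℂ)) U :=
    fun i w hw => (hdt i w hw).differentiableAt.differentiableWithinAt
  have h1 := Complex.hasSum_deriv_of_summable_norm hu hdo hUo hbd hzU
  have h2 := (Complex.differentiableOn_tsum_of_summable_norm hu hdo hUo hbd).differentiableAt
    (hUo.mem_nhds hzU)
  have h3 := h2.hasDerivAt
  rw [← h1.tsum_eq] at h3
  have h4 : ∑' i, deriv (fun w : ℂ => 1 / (w - c i) + 1 / (c i : ℂ)) z = ∑' i, (-1 / (z - c i) ^ 2) :=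
    tsum_congr fun i => (hdt i z hzU).deriv
  rw [h4] at h3
  refine h3.congr_of_eventuallyEq ?_
  filter_upwards [hUo.mem_nhds hzU] with w hw
  exact CP_logDeriv hc hs (by have := hw.1; simp at this; linarith)

end CP
/-! ### Part A6: zeros of the canonical product -/

lemma E1_div_eq {x : ℝ} (hx : x ≠ 0) (z : ℂ) :
    E1 (z / (x : ℂ)) = (z - x) * (-(1 / (x : ℂ)) * Complex.exp (z / x)) := by
  have : (x : ℂ) ≠ 0 := by exact_mod_cast hx
  unfold E1
  field_simp
  ring

lemma CP_zero_order {ι : Type*} {c : ι → ℝ} (hc : ∀ i, c i ≠ 0)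
    (hs : Summable fun i => 1 / (c i) ^ 2) (x : ℝ) (s : Set ι) [Fintype s]
    (hsd : ∀ i, i ∈ s ↔ c i = x) : ∃ g : ℂ → ℂ, Differentiable ℂ g ∧ g x ≠ 0 ∧
      ∀ z, CP c z = (z - x) ^ (Fintype.card s) * g z := by
  set c' : (sᶜ : Set ι) → ℝ := fun i => c i with hc'
  have hs' : Summable fun i => 1 / (c' i) ^ 2 := hs.comp_injective Subtype.val_injective
  refine ⟨fun z => (-(1 / (x : ℂ)) * Complex.exp (z / x)) ^ (Fintype.card s) * CP c' z,
    ?_, ?_, ?_⟩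
  · have := CP_diff hs'
    fun_prop
  · refine mul_ne_zero ?_ (CP_ne_zero (c := c') (fun i => hc i) hs' ?_)
    · rcases Nat.eq_zero_or_pos (Fintype.card s) with h | h
      · rw [h]; simp
      · obtain ⟨i⟩ := Fintype.card_pos_iff.1 h
        have hx : x ≠ 0 := by rw [← show c i = x from (hsd i).1 i.2]; exact hc i
        have hx' : (x : ℂ) ≠ 0 := by exact_mod_cast hx
        apply pow_ne_zero
        apply mul_ne_zero _ (Complex.exp_ne_zero _)
        simpa using hx
    · intro i h
      exact i.2 ((hsd i).2 (by exact_mod_cast h.symm))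
  · intro z
    have h1 : HasProd ((fun i => E1 (z / (c i : ℂ))) ∘ ((↑) : s → ι))
        (∏ i : s, E1 (z / (c i : ℂ))) := hasProd_fintype _
    have h2 : HasProd ((fun i => E1 (z / (c i : ℂ))) ∘ ((↑) : (sᶜ : Set ι) → ι)) (CP c' z) :=
      (CP_multipliable hs' z).hasProd
    have h3 := (h1.mul_compl h2).tprod_eq
    change CP c z = _ at h3
    rw [h3]
    have h4 : ∀ i : s, E1 (z / (c i : ℂ)) = (z - x) * (-(1 / (x : ℂ)) * Complex.exp (z / x)) := by
      intro i
      have hx : c i = x := (hsd i).1 i.2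
      have hx0 : x ≠ 0 := hx ▸ hc i
      rw [hx]
      exact E1_div_eq hx0 z
    rw [Finset.prod_congr rfl (fun i _ => h4 i)]
    simp only [Finset.prod_const, Finset.card_univ]
    rw [mul_pow]
    ring

/-! ### Part G: exponential of an absolutely convergent series -/

section ExpSeries
variable {I : Type*}

lemma hasSum_prod_pow {f : I → ℂ} (hf : Summable fun i => ‖f i‖) (n : ℕ) :
    (Summable fun v : Fin n → I => ‖∏ k, f (v k)‖) ∧
    HasSum (fun v : Fin n → I => ∏ k, f (v k)) ((∑' i, f i) ^ n) ∧
    HasSum (fun v : Fin n → I => ‖∏ k, f (v k)‖) ((∑' i, ‖f i‖) ^ n) := by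
  induction n with
  | zero =>
    refine ⟨?_, ?_, ?_⟩
    · exact (hasSum_fintype _).summable
    · simp
    · simp
  | succ n ih =>
    obtain ⟨ih1, ih2, ih3⟩ := ih
    have hs := hf.mul_norm ih1
    have e := Fin.consEquiv (fun _ : Fin (n + 1) => I)
    have key : HasSum (fun x : I × (Fin n → I) => f x.1 * ∏ k, f (x.2 k))
        ((∑' i, f i) * (∑' i, f i) ^ n) := by
      have h := tsum_mul_tsum_of_summable_norm hf ih1
      rw [ih2.tsum_eq] at h
      rw [h]
      exact hs.of_norm.hasSum
    have key2 : HasSum (fun x : I × (Fin n → I) => ‖f x.1‖ * ‖∏ k, f (x.2 k)‖)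
        ((∑' i, ‖f i‖) * (∑' i, ‖f i‖) ^ n) := by
      have hf' : Summable fun i => ‖‖f i‖‖ := by simpa using hf
      have ih1' : Summable fun v : Fin n → I => ‖‖∏ k, f (v k)‖‖ := by simpa using ih1
      have h := tsum_mul_tsum_of_summable_norm hf' ih1'
      rw [ih3.tsum_eq] at h
      rw [h]
      refine Summable.hasSum ?_
      simpa [norm_mul] using hs
    have k1 : HasSum (fun v : Fin (n + 1) → I => ∏ k, f (v k)) ((∑' i, f i) ^ (n + 1)) := by
      rw [pow_succ', ← (Fin.consEquiv (fun _ : Fin (n + 1) => I)).hasSum_iff]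
      convert key using 2 with x
      simp [Fin.prod_univ_succ, Fin.consEquiv]
    have k2 : HasSum (fun v : Fin (n + 1) → I => ‖∏ k, f (v k)‖) ((∑' i, ‖f i‖) ^ (n + 1)) := by
      rw [pow_succ', ← (Fin.consEquiv (fun _ : Fin (n + 1) => I)).hasSum_iff]
      convert key2 using 2 with x
      simp [Fin.prod_univ_succ, Fin.consEquiv]
    exact ⟨k2.summable, k1, k2⟩

lemma exp_series {f : I → ℂ} (hf : Summable fun i => ‖f i‖) :
    (Summable fun x : (Σ n : ℕ, (Fin n → I)) => ‖(∏ k, f (x.2 k)) / (x.1.factorial : ℂ)‖) ∧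
    HasSum (fun x : (Σ n : ℕ, (Fin n → I)) => (∏ k, f (x.2 k)) / (x.1.factorial : ℂ))
      (Complex.exp (∑' i, f i)) := by
  have h1 : Summable fun x : (Σ n : ℕ, (Fin n → I)) =>
      ‖(∏ k, f (x.2 k)) / (x.1.factorial : ℂ)‖ := by
    rw [summable_sigma_of_nonneg (fun _ => norm_nonneg _)]
    refine ⟨fun n => ?_, ?_⟩
    · simp only [norm_div]
      exact (hasSum_prod_pow hf n).1.div_const _
    · have : (fun n : ℕ => ∑' v : Fin n → I, ‖(∏ k, f (v k)) / (n.factorial : ℂ)‖) =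
          fun n => (∑' i, ‖f i‖) ^ n / (n.factorial : ℝ) := by
        ext n
        simp only [norm_div]
        rw [tsum_div_const, (hasSum_prod_pow hf n).2.2.tsum_eq]
        simp
      simp only [this]
      exact Real.summable_pow_div_factorial _
  refine ⟨h1, ?_⟩
  have h2 := h1.of_norm.hasSum
  have h3 : ∀ n : ℕ, HasSum (fun v : Fin n → I => (∏ k, f (v k)) / (n.factorial : ℂ))
      ((∑' i, f i) ^ n / (n.factorial : ℂ)) := fun n => (hasSum_prod_pow hf n).2.1.div_const _
  have h4 := h2.sigma h3
  have h5 : HasSum (fun n : ℕ => (∑' i, f i) ^ n / (n.factorial : ℂ)) (Complex.exp (∑' i, f i)) := by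
    rw [Complex.exp_eq_exp_ℂ]
    exact NormedSpace.expSeries_div_hasSum_exp _
  rw [← h4.unique h5]
  exact h2

end ExpSeries
/-! ### Part F: entire functions with Dirichlet expansions in two half planes -/

/-- the exponential with frequency `w` -/
def ee (w : ℝ) (z : ℂ) : ℂ := Complex.exp (2 * Real.pi * Complex.I * z * (w : ℂ))

lemma ee_norm (w : ℝ) (z : ℂ) : ‖ee w z‖ = Real.exp (-(2 * Real.pi * z.im * w)) := by
  unfold ee
  rw [Complex.norm_exp]
  congr 1
  simp [mul_assoc]

lemma ee_diff (w : ℝ) : Differentiable ℂ (ee w) := by unfold ee; fun_prop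

lemma ee_mul (v w : ℝ) (z : ℂ) : ee v z * ee w z = ee (v + w) z := by
  unfold ee
  rw [← Complex.exp_add]
  congr 1
  push_cast
  ring

lemma ee_zero (z : ℂ) : ee 0 z = 1 := by simp [ee]

lemma ee_conj (w : ℝ) (z : ℂ) : starRingEnd ℂ (ee w z) = ee (-w) (starRingEnd ℂ z) := by
  unfold ee
  rw [← Complex.exp_conj]
  congr 1
  have h2 : starRingEnd ℂ (2 : ℂ) = 2 := Complex.conj_ofReal 2
  simp only [map_mul, h2, Complex.conj_ofReal, Complex.conj_I]
  push_cast
  ring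

lemma ee_add (w : ℝ) (z z' : ℂ) : ee w (z + z') = ee w z * ee w z' := by
  unfold ee
  rw [← Complex.exp_add]
  congr 1
  ring

lemma ee_norm_real (w x : ℝ) : ‖ee w x‖ = 1 := by simp [ee_norm]

/-- mean of a single exponential -/
def eT (T : ℝ) (w : ℝ) : ℂ := (1 / (2 * T) : ℂ) * ∫ x in (-T)..T, ee w x

lemma eT_norm_le {T : ℝ} (hT : 0 < T) (w : ℝ) : ‖eT T w‖ ≤ 1 := by
  unfold eT
  have h := intervalIntegral.norm_integral_le_of_norm_le_const (a := -T) (b := T)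
    (f := fun x : ℝ => ee w x) (C := 1) (fun x _ => (ee_norm_real w x).le)
  have h2 : |T - -T| = 2 * T := by rw [abs_of_pos] <;> linarith
  rw [h2] at h
  rw [norm_mul]
  have h3 : ‖(1 / (2 * T) : ℂ)‖ = 1 / (2 * T) := by
    rw [norm_div, norm_mul, Complex.norm_real, Real.norm_of_nonneg hT.le]; simp
  rw [h3]
  calc _ ≤ 1 / (2 * T) * (1 * (2 * T)) := by gcongr
    _ = 1 := by field_simp

lemma eT_zero {T : ℝ} (hT : 0 < T) : eT T 0 = 1 := by
  unfold eT
  have : (T : ℂ) ≠ 0 := by exact_mod_cast hT.ne'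
  simp only [ee_zero, intervalIntegral.integral_const, Complex.real_smul]
  push_cast
  field_simp
  ring

lemma eT_tendsto (w : ℝ) : Tendsto (fun T => eT T w) atTop (𝓝 (if w = 0 then 1 else 0)) := by
  split_ifs with h
  · subst h
    refine tendsto_const_nhds.congr' ?_
    filter_upwards [eventually_gt_atTop 0] with T hT
    exact (eT_zero hT).symm
  · have hc : (2 * Real.pi * Complex.I * (w : ℂ)) ≠ 0 := by
      have : (w : ℂ) ≠ 0 := by exact_mod_cast h
      have := Real.pi_ne_zero
      simp_all
    refine squeeze_zero_norm' (a := fun T => (1 / ‖2 * Real.pi * Complex.I * (w : ℂ)‖) * T⁻¹) ?_ ?_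
    · filter_upwards [eventually_gt_atTop 0] with T hT
      unfold eT
      have e : ∫ x in (-T)..T, ee w x =
          ∫ x in (-T)..T, Complex.exp ((2 * Real.pi * Complex.I * (w : ℂ)) * x) := by
        congr 1; ext x; unfold ee; congr 1; ring
      have e1 : ∀ x : ℝ, ‖Complex.exp ((2 * Real.pi * Complex.I * (w : ℂ)) * x)‖ = 1 := by
        intro x
        rw [← ee_norm_real w x]; unfold ee; congr 2; ring
      rw [e, integral_exp_mul_complex hc, norm_mul]
      have h3 : ‖(1 / (2 * T) : ℂ)‖ = 1 / (2 * T) := by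
        rw [norm_div, norm_mul, Complex.norm_real, Real.norm_of_nonneg hT.le]; simp
      rw [h3, norm_div]
      have h4 : ‖Complex.exp (2 * Real.pi * Complex.I * (w : ℂ) * (T : ℝ)) -
          Complex.exp (2 * Real.pi * Complex.I * (w : ℂ) * ((-T : ℝ) : ℂ))‖ ≤ 2 := by
        refine (norm_sub_le _ _).trans ?_
        rw [e1, e1]; norm_num
      calc _ ≤ 1 / (2 * T) * (2 / ‖2 * Real.pi * Complex.I * (w : ℂ)‖) := by gcongr
        _ = _ := by field_simp
    · simpa using (tendsto_inv_atTop_zero (𝕜 := ℝ)).const_mul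
        (1 / ‖2 * Real.pi * Complex.I * (w : ℂ)‖)

lemma mean_series {J : Type*} [Countable J] {p : J → ℂ} {w : J → ℝ}
    (hp : Summable fun j => ‖p j‖) :
    Tendsto (fun T : ℝ => (1 / (2 * T) : ℂ) * ∫ x in (-T)..T, ∑' j, p j * ee (w j) x) atTop
      (𝓝 (∑' j, if w j = 0 then p j else 0)) := by
  have key : ∀ T : ℝ, (1 / (2 * T) : ℂ) * ∫ x in (-T)..T, ∑' j, p j * ee (w j) x =
      ∑' j, p j * eT T (w j) := by
    intro T
    have h := intervalIntegral.hasSum_integral_of_dominated_convergence (μ := volume) (a := -T) (b := T)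
      (F := fun j (x : ℝ) => p j * ee (w j) x) (f := fun x : ℝ => ∑' j, p j * ee (w j) x)
      (fun j _ => ‖p j‖) ?_ ?_ ?_ ?_ ?_
    · rw [← h.tsum_eq, ← tsum_mul_left]
      refine tsum_congr fun j => ?_
      unfold eT
      rw [intervalIntegral.integral_const_mul]
      ring
    · intro j
      have : Continuous fun x : ℝ => p j * ee (w j) x := by unfold ee; fun_prop
      exact this.aestronglyMeasurable
    · intro j
      refine ae_of_all _ fun x _ => ?_
      rw [norm_mul, ee_norm_real, mul_one]
    · exact ae_of_all _ fun x _ => hp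
    · exact intervalIntegrable_const
    · refine ae_of_all _ fun x _ => ?_
      refine (Summable.of_norm ?_).hasSum
      simpa [norm_mul, ee_norm_real] using hp
  simp_rw [key]
  refine tendsto_tsum_of_dominated_convergence hp (fun j => ?_) ?_
  · have := (eT_tendsto (w j)).const_mul (p j)
    simpa using this
  · filter_upwards [eventually_gt_atTop 0] with T hT j
    rw [norm_mul]
    exact mul_le_of_le_one_right (norm_nonneg _) (eT_norm_le hT _)

lemma strip_bounded {G : ℂ → ℂ} (hG : Differentiable ℂ G) {K s C : ℝ} (hK : 0 ≤ K) (hs : 0 < s)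
    (hgr : ∀ z, ‖G z‖ ≤ Real.exp (K * (1 + ‖z‖ ^ 2)))
    (h1 : ∀ z : ℂ, z.im = s → ‖G z‖ ≤ C) (h2 : ∀ z : ℂ, z.im = -s → ‖G z‖ ≤ C) (z : ℂ)
    (hz1 : -s ≤ z.im) (hz2 : z.im ≤ s) : ‖G z‖ ≤ C := by
  refine PhragmenLindelof.horizontal_strip (a := -s) (b := s) hG.diffContOnCl ?_ h2 h1 hz1 hz2
  have hc : 0 < Real.pi / (4 * s) := by have := Real.pi_pos; positivity
  set c := Real.pi / (4 * s) with hcdef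
  refine ⟨c, ?_, K * (1 + s ^ 2) + 2 * K / c ^ 2, ?_⟩
  · rw [hcdef]
    have := Real.pi_pos
    apply div_lt_div_of_pos_left this (by linarith) (by linarith)
  · refine Asymptotics.IsBigO.of_bound 1 ?_
    rw [eventually_inf_principal]
    refine Eventually.of_forall fun z hz => ?_
    rw [one_mul, Real.norm_of_nonneg (Real.exp_pos _).le]
    refine (hgr z).trans (Real.exp_le_exp.2 ?_)
    have hq := Real.quadratic_le_exp_of_nonneg (x := c * |z.re|) (by positivity)
    have h3 : ‖z‖ ^ 2 = z.re ^ 2 + z.im ^ 2 := by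
      rw [← Complex.normSq_eq_norm_sq, Complex.normSq_apply]; ring
    have h4 : z.im ^ 2 ≤ s ^ 2 := by
      simp only [Set.mem_preimage, Set.mem_Ioo] at hz
      apply sq_le_sq'  hz.1.le hz.2.le
    have h5 : 1 ≤ Real.exp (c * |z.re|) := Real.one_le_exp (by positivity)
    have h6 : z.re ^ 2 ≤ 2 / c ^ 2 * Real.exp (c * |z.re|) := by
      have h7 : c ^ 2 * z.re ^ 2 ≤ 2 * Real.exp (c * |z.re|) := by
        have : (c * |z.re|) ^ 2 = c ^ 2 * z.re ^ 2 := by rw [mul_pow, sq_abs]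
        have h8 : 0 ≤ c * |z.re| := by positivity
        nlinarith
      rw [div_mul_eq_mul_div, le_div_iff₀ (by positivity)]
      linarith
    calc K * (1 + ‖z‖ ^ 2) ≤ K * ((1 + s ^ 2) * Real.exp (c * |z.re|) +
          2 / c ^ 2 * Real.exp (c * |z.re|)) := by
          apply mul_le_mul_of_nonneg_left _ hK
          rw [h3]
          nlinarith [sq_nonneg s]
      _ = _ := by ring

lemma contour_shift {H : ℂ → ℂ} (hH : Differentiable ℂ H) {s C : ℝ} (hs : 0 < s)
    (hb : ∀ z : ℂ, -s ≤ z.im → z.im ≤ s → ‖H z‖ ≤ C) :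
    Tendsto (fun T : ℝ => (1 / (2 * T) : ℂ) * (∫ x in (-T)..T, H (x + (s : ℝ) * Complex.I)) -
      (1 / (2 * T) : ℂ) * ∫ x in (-T)..T, H (x + ((-s : ℝ) : ℂ) * Complex.I)) atTop (𝓝 0) := by
  refine squeeze_zero_norm' (a := fun T => (2 * (C * (2 * s))) * T⁻¹) ?_ ?_
  · filter_upwards [eventually_gt_atTop 0] with T hT
    have h := Complex.integral_boundary_rect_eq_zero_of_differentiableOn H ⟨-T, -s⟩ ⟨T, s⟩
      hH.differentiableOn
    simp only at h
    have hv : ∀ x : ℝ, ‖∫ y in (-s)..s, H (x + y * Complex.I)‖ ≤ C * (2 * s) := by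
      intro x
      have := intervalIntegral.norm_integral_le_of_norm_le_const (a := -s) (b := s)
        (f := fun y : ℝ => H (x + y * Complex.I)) (C := C) ?_
      · have h2 : |s - -s| = 2 * s := by rw [abs_of_pos] <;> linarith
        rwa [h2] at this
      · intro y hy
        rw [Set.uIoc_of_le (by linarith)] at hy
        apply hb <;> simp
        · exact hy.1.le
        · exact hy.2
    have e : (1 / (2 * T) : ℂ) * (∫ x in (-T)..T, H (x + (s : ℝ) * Complex.I)) -
      (1 / (2 * T) : ℂ) * ∫ x in (-T)..T, H (x + ((-s : ℝ) : ℂ) * Complex.I) =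
      (1 / (2 * T) : ℂ) * (Complex.I * (∫ y in (-s)..s, H ((T : ℝ) + y * Complex.I)) -
        Complex.I * ∫ y in (-s)..s, H (((-T : ℝ) : ℂ) + y * Complex.I)) := by
      rw [smul_eq_mul, smul_eq_mul] at h
      linear_combination (-(1 / (2 * T) : ℂ)) * h
    rw [e, norm_mul]
    have h3 : ‖(1 / (2 * T) : ℂ)‖ = 1 / (2 * T) := by
      rw [norm_div, norm_mul, Complex.norm_real, Real.norm_of_nonneg hT.le]; simp
    rw [h3]
    have h4 := hv T
    have h5 := hv (-T)
    have h6 : ‖Complex.I * (∫ y in (-s)..s, H ((T : ℝ) + y * Complex.I)) -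
        Complex.I * ∫ y in (-s)..s, H (((-T : ℝ) : ℂ) + y * Complex.I)‖ ≤
          C * (2 * s) + C * (2 * s) := by
      refine (norm_sub_le _ _).trans ?_
      rw [norm_mul, norm_mul, Complex.norm_I, one_mul, one_mul]
      exact add_le_add h4 h5
    have h7 : 0 ≤ C * (2 * s) := (norm_nonneg _).trans h4
    calc _ ≤ 1 / (2 * T) * (C * (2 * s) + C * (2 * s)) := by gcongr
      _ = (C * (2 * s)) * T⁻¹ := by field_simp; ring
      _ ≤ _ := by
        have : 0 ≤ T⁻¹ := by positivity
        nlinarith [mul_nonneg h7 this]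
  · simpa using (tendsto_inv_atTop_zero (𝕜 := ℝ)).const_mul (2 * (C * (2 * s)))
lemma enumerate_series {a : ℝ → ℂ} (ha : Summable fun l => ‖a l‖) {W : ℝ} (hW : 0 ≤ W)
    (hsupp : ∀ l, a l ≠ 0 → |l| ≤ W) :
    ∃ (q : ℕ → ℂ) (ω : ℕ → ℝ), (Summable fun i => ‖q i‖) ∧ IsBounded (Set.range ω) ∧
      ∀ z, dserC q ω z = ∑' l, a l * ee l z := by
  have hcount : (Function.support a).Countable := by
    have := ha.countable_support
    simpa [Function.support] using this
  obtain ⟨e, he⟩ := Set.countable_iff_exists_injective.1 hcount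
  refine ⟨Function.extend e (fun l => a l) 0, Function.extend e (fun l => (l : ℝ)) 0, ?_, ?_, ?_⟩
  · have h1 : (fun i => ‖Function.extend e (fun l : Function.support a => a l) 0 i‖) =
        Function.extend e (fun l : Function.support a => ‖a l‖) 0 := by
      ext i
      by_cases h : ∃ l, e l = i
      · obtain ⟨l, rfl⟩ := h
        rw [he.extend_apply, he.extend_apply]
      · rw [Function.extend_apply' _ _ _ h, Function.extend_apply' _ _ _ h]; simp
    rw [h1, summable_extend_zero he]
    exact ha.comp_injective Subtype.val_injective
  · refine (Metric.isBounded_closedBall (x := (0:ℝ)) (r := W)).subset ?_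
    rintro _ ⟨i, rfl⟩
    by_cases h : ∃ l, e l = i
    · obtain ⟨l, rfl⟩ := h
      rw [he.extend_apply]
      simpa using hsupp l l.2
    · rw [Function.extend_apply' _ _ _ h]
      simpa using hW
  · intro z
    have h1 : (fun i => Function.extend e (fun l : Function.support a => a l) 0 i *
        Complex.exp (2 * Real.pi * Complex.I * z *
          ((Function.extend e (fun l : Function.support a => (l : ℝ)) 0 i : ℝ) : ℂ))) =
        Function.extend e (fun l : Function.support a => a l * ee l z) 0 := by
      ext i
      by_cases h : ∃ l, e l = i
      · obtain ⟨l, rfl⟩ := h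
        rw [he.extend_apply, he.extend_apply, he.extend_apply]; rfl
      · rw [Function.extend_apply' _ _ _ h, Function.extend_apply' _ _ _ h,
          Function.extend_apply' _ _ _ h]; simp
    unfold dserC
    rw [h1, tsum_extend_zero he]
    refine tsum_subtype_eq_of_support_subset (f := fun l => a l * ee l z) ?_
    intro l hl
    simp only [Function.mem_support] at hl ⊢
    exact left_ne_zero_of_mul hl

theorem F_main {G : ℂ → ℂ} (hG : Differentiable ℂ G) {K : ℝ} (hK : 0 ≤ K)
    (hgr : ∀ z, ‖G z‖ ≤ Real.exp (K * (1 + ‖z‖ ^ 2)))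
    (hconj : ∀ z, G (starRingEnd ℂ z) = starRingEnd ℂ (G z))
    {J : Type*} [Countable J] (p : J → ℂ) (w : J → ℝ) {s W : ℝ} (hs : 0 < s)
    (hW : 0 ≤ W) (hw : ∀ j, -W ≤ w j)
    (hp : Summable fun j => ‖p j * ee (w j) (s * Complex.I)‖)
    (hexp : ∀ z : ℂ, s ≤ z.im → G z = ∑' j, p j * ee (w j) z) :
    ∃ (q : ℕ → ℂ) (ω : ℕ → ℝ), (Summable fun i => ‖q i‖) ∧ IsBounded (Set.range ω) ∧
      ∀ z, dserC q ω z = G z := by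
  have hpi := Real.pi_pos
  -- boundedness on the strip
  set C : ℝ := ∑' j, ‖p j * ee (w j) (s * Complex.I)‖ with hC
  have hterm : ∀ z : ℂ, z.im = s → ∀ j, ‖p j * ee (w j) z‖ = ‖p j * ee (w j) (s * Complex.I)‖ := by
    intro z hz j
    rw [norm_mul, norm_mul, ee_norm, ee_norm, hz]
    simp
  have hb1 : ∀ z : ℂ, z.im = s → ‖G z‖ ≤ C := by
    intro z hz
    rw [hexp z hz.ge]
    refine (norm_tsum_le_tsum_norm ?_).trans_eq ?_
    · simp_rw [hterm z hz]; exact hp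
    · exact tsum_congr (hterm z hz)
  have hb2 : ∀ z : ℂ, z.im = -s → ‖G z‖ ≤ C := by
    intro z hz
    have h := hb1 (starRingEnd ℂ z) (by simp [hz])
    rwa [hconj, Complex.norm_conj] at h
  have hb := strip_bounded hG hK hs hgr hb1 hb2
  have hC0 : 0 ≤ C := tsum_nonneg fun _ => norm_nonneg _
  -- coefficients
  set a : ℝ → ℂ := fun l => ∑' j, if w j = l then p j else 0 with ha
  have hsym : ∀ l, a l = starRingEnd ℂ (a (-l)) := by
    intro l
    have hH : Differentiable ℂ fun z => G z * ee (-l) z := hG.mul (ee_diff _)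
    have hHb : ∀ z : ℂ, -s ≤ z.im → z.im ≤ s →
        ‖G z * ee (-l) z‖ ≤ C * Real.exp (2 * Real.pi * s * |l|) := by
      intro z h1 h2
      rw [norm_mul, ee_norm]
      gcongr
      · exact hb z h1 h2
      · have : z.im * l ≤ s * |l| := by
          refine (le_abs_self _).trans ?_
          rw [abs_mul]
          gcongr
          exact abs_le.2 ⟨h1, h2⟩
        nlinarith
    have hsh := contour_shift hH hs hHb
    -- upper mean
    have hup : Tendsto (fun T : ℝ => (1 / (2 * T) : ℂ) * ∫ x in (-T)..T,
        G (x + (s : ℝ) * Complex.I) * ee (-l) (x + (s : ℝ) * Complex.I)) atTop (𝓝 (a l)) := by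
      have h1 : Summable fun j => ‖p j * ee (w j + -l) (s * Complex.I)‖ := by
        refine (hp.mul_right ‖ee (-l) (s * Complex.I)‖).congr fun j => ?_
        rw [← ee_mul, ← mul_assoc, norm_mul _ (ee (-l) _)]
      have h2 := mean_series (w := fun j => w j + -l) h1
      have h3 : (∑' j, if w j + -l = 0 then p j * ee (w j + -l) (s * Complex.I) else 0) = a l := by
        refine tsum_congr fun j => ?_
        by_cases h : w j = l
        · simp [h, ee_zero]
        · have : ¬ (w j + -l = 0) := fun h' => h (by linarith)
          simp [h, this]
      rw [h3] at h2
      refine h2.congr fun T => ?_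
      congr 2
      ext x
      rw [hexp _ (by simp), ← tsum_mul_right]
      refine tsum_congr fun j => ?_
      rw [mul_assoc, mul_assoc, ee_mul, ← ee_add, add_comm (_ * Complex.I) (x:ℂ)]
    have hdown : Tendsto (fun T : ℝ => (1 / (2 * T) : ℂ) * ∫ x in (-T)..T,
        G (x + ((-s : ℝ) : ℂ) * Complex.I) * ee (-l) (x + ((-s : ℝ) : ℂ) * Complex.I)) atTop
        (𝓝 (starRingEnd ℂ (a (-l)))) := by
      have h1 : Summable fun j => ‖starRingEnd ℂ (p j) *
          ee (-w j + -l) (((-s : ℝ) : ℂ) * Complex.I)‖ := by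
        refine (hp.mul_right ‖ee (-l) (((-s : ℝ) : ℂ) * Complex.I)‖).congr fun j => ?_
        rw [← ee_mul, ← mul_assoc, norm_mul _ (ee (-l) _), norm_mul, norm_mul, Complex.norm_conj,
          ee_norm, ee_norm (-w j)]
        simp
      have h2 := mean_series (w := fun j => -w j + -l) h1
      have h3 : (∑' j, if -w j + -l = 0 then starRingEnd ℂ (p j) *
          ee (-w j + -l) (((-s : ℝ) : ℂ) * Complex.I) else 0) = starRingEnd ℂ (a (-l)) := by
        rw [ha, Complex.conj_tsum]
        refine tsum_congr fun j => ?_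
        by_cases h : w j = -l
        · simp [h, ee_zero]
        · have : ¬ (-w j + -l = 0) := fun h' => h (by linarith)
          simp [h, this]
      rw [h3] at h2
      refine h2.congr fun T => ?_
      congr 2
      ext x
      have hx : ((x : ℂ) + ((-s : ℝ) : ℂ) * Complex.I) =
          starRingEnd ℂ ((x : ℂ) + (s : ℝ) * Complex.I) := by simp
      have hGx : G (x + ((-s : ℝ) : ℂ) * Complex.I) = ∑' j, starRingEnd ℂ (p j) *
          ee (-w j) (x + ((-s : ℝ) : ℂ) * Complex.I) := by
        rw [hx, hconj, hexp _ (by simp), Complex.conj_tsum]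
        refine tsum_congr fun j => ?_
        rw [map_mul, ee_conj]
      rw [hGx, ← tsum_mul_right]
      refine tsum_congr fun j => ?_
      rw [mul_assoc, mul_assoc, ee_mul, ← ee_add, add_comm (_ * Complex.I) (x:ℂ)]
    have := tendsto_nhds_unique hsh (hup.sub hdown)
    exact sub_eq_zero.1 this.symm
  have ha_low : ∀ l, l < -W → a l = 0 := by
    intro l hl
    rw [ha]
    have : ∀ j, (if w j = l then p j else 0) = 0 := by
      intro j
      rw [if_neg]
      intro h
      have := hw j
      linarith
    simp [this]
  have ha_supp : ∀ l, a l ≠ 0 → |l| ≤ W := by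
    intro l hl
    rw [abs_le]
    constructor
    · by_contra h
      exact hl (ha_low l (by linarith))
    · by_contra h
      apply hl
      rw [hsym, ha_low (-l) (by linarith)]
      simp
  -- regrouping
  have hfib : ∀ (z : ℂ) (l : ℝ), ∑' j : (w ⁻¹' {l}), p j * ee (w j) z = a l * ee l z := by
    intro z l
    have h1 : ∀ j : (w ⁻¹' {l}), p j * ee (w j) z = p j * ee l z := by
      intro j
      have : w j = l := j.2
      rw [this]
    rw [tsum_congr h1, tsum_mul_right, tsum_subtype (w ⁻¹' {l}) p]
    congr 1
  have hsumN : Summable fun l => ‖a l * ee l (s * Complex.I)‖ := by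
    have h1 := (hp.hasSum.tsum_fiberwise w).summable
    refine Summable.of_nonneg_of_le (fun _ => norm_nonneg _) (fun l => ?_) h1
    rw [← hfib]
    exact norm_tsum_le_tsum_norm (hp.comp_injective Subtype.val_injective)
  have hasum : Summable fun l => ‖a l‖ := by
    refine Summable.of_nonneg_of_le (fun _ => norm_nonneg _) (fun l => ?_)
      (hsumN.mul_left (Real.exp (2 * Real.pi * s * W)))
    by_cases h : a l = 0
    · simp [h]
    · have h1 := ha_supp l h
      rw [norm_mul, ee_norm]
      have : Real.exp (2 * Real.pi * s * W) * (‖a l‖ * Real.exp (-(2 * Real.pi * ((s : ℂ) * Complex.I).im * l)))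
        = Real.exp (2 * Real.pi * s * (W - l)) * ‖a l‖ := by
        rw [mul_comm ‖a l‖, ← mul_assoc, ← Real.exp_add]
        congr 2
        simp
        ring
      rw [this]
      have h2 : 1 ≤ Real.exp (2 * Real.pi * s * (W - l)) := by
        apply Real.one_le_exp
        have := (abs_le.1 h1).2
        have : 0 ≤ W - l := by linarith
        positivity
      nlinarith [norm_nonneg (a l)]
  obtain ⟨q, ω, hq, hω, hqz⟩ := enumerate_series hasum hW ha_supp
  refine ⟨q, ω, hq, hω, ?_⟩
  -- Q is entire
  set Q : ℂ → ℂ := fun z => ∑' l, a l * ee l z with hQ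
  have hQd : Differentiable ℂ Q := by
    intro z
    set U : Set ℂ := ball 0 (‖z‖ + 1) with hU
    have := Complex.differentiableOn_tsum_of_summable_norm (U := U)
      (F := fun l z => a l * ee l z)
      (hasum.mul_right (Real.exp (2 * Real.pi * (‖z‖ + 1) * W)))
      (fun l => ((ee_diff l).const_mul _).differentiableOn) isOpen_ball ?_
    · exact this.differentiableAt (isOpen_ball.mem_nhds (by simp [hU]))
    · intro l v hv
      rw [norm_mul, ee_norm]
      by_cases h : a l = 0
      · simp [h]
      · have h1 := ha_supp l h
        gcongr
        have h2 : ‖v‖ < ‖z‖ + 1 := by simpa [hU] using hv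
        have h3 : |v.im| ≤ ‖z‖ + 1 := (Complex.abs_im_le_norm v).trans h2.le
        have h4 : -(v.im * l) ≤ (‖z‖ + 1) * W := by
          refine (neg_le_abs _).trans ?_
          rw [abs_mul]
          gcongr
        nlinarith
  have hQG : Q = G := by
    have h1 : AnalyticOnNhd ℂ Q Set.univ := fun z _ => hQd.analyticAt z
    have h2 : AnalyticOnNhd ℂ G Set.univ := fun z _ => hG.analyticAt z
    refine h1.eq_of_eventuallyEq h2 (z₀ := ((s + 1 : ℝ) : ℂ) * Complex.I) ?_
    have ho : IsOpen {z : ℂ | s < z.im} := isOpen_lt continuous_const Complex.continuous_im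
    filter_upwards [ho.mem_nhds (by simp : (((s + 1 : ℝ) : ℂ) * Complex.I) ∈ {z : ℂ | s < z.im})]
      with z hz
    have hz' : s ≤ z.im := le_of_lt hz
    rw [hexp z hz']
    have hsz : Summable fun j => p j * ee (w j) z := by
      refine Summable.of_norm_bounded (hp.mul_left (Real.exp (2 * Real.pi * (z.im - s) * W)))
        fun j => ?_
      rw [norm_mul, norm_mul, ee_norm, ee_norm]
      have : Real.exp (2 * Real.pi * (z.im - s) * W) *
          (‖p j‖ * Real.exp (-(2 * Real.pi * ((s : ℂ) * Complex.I).im * w j)))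
        = ‖p j‖ * Real.exp (2 * Real.pi * (z.im - s) * W - 2 * Real.pi * s * w j) := by
        rw [mul_comm, mul_assoc, ← Real.exp_add]
        congr 2
        simp
        ring
      rw [this]
      gcongr
      have h3 := hw j
      have h4 : 0 ≤ 2 * Real.pi * (z.im - s) * (w j + W) := by
        have : 0 ≤ z.im - s := by linarith
        have : 0 ≤ w j + W := by linarith
        positivity
      nlinarith
    have h5 := hsz.hasSum.tsum_fiberwise w
    rw [← h5.tsum_eq]
    exact (tsum_congr fun l => hfib z l).symm
  intro z
  rw [hqz, ← hQG]
/-! ### Part B: consequences of the Fourier transform identity -/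

lemma test_pair {μ ν : PPM ℝ} (ht : μ.temperate) (hF : IsFT μ ν) {f : ℝ → ℂ}
    (h1 : HasCompactSupport f) (h2 : ContDiff ℝ ((⊤ : ℕ∞) : WithTop ℕ∞) f) :
    (Summable fun x : ℝ => μ.mass x * ∫ v : ℝ, Complex.exp (-2 * Real.pi * Complex.I * v * x) * f v) ∧
    ∑' x : ℝ, μ.mass x * ∫ v : ℝ, Complex.exp (-2 * Real.pi * Complex.I * v * x) * f v =
      ∑' g, ν.mass g * f g := by
  have key : ∀ x : ℝ, (FourierTransform.fourierCLE ℂ (SchwartzMap ℝ ℂ) (h1.toSchwartzMap h2)) x =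
      ∫ v : ℝ, Complex.exp (-2 * Real.pi * Complex.I * v * x) * f v := by
    intro x
    rw [FourierTransform.fourierCLE_apply, SchwartzMap.fourier_coe, Real.fourier_real_eq_integral_exp_smul]
    refine integral_congr_ae (Eventually.of_forall fun v => ?_)
    simp only [smul_eq_mul]
    congr 2
    push_cast
    ring
  have hs := ht (FourierTransform.fourierCLE ℂ (SchwartzMap ℝ ℂ) (h1.toSchwartzMap h2))
  have hp := hF (h1.toSchwartzMap h2) h1
  unfold PPM.pair at hp
  simp only [key] at hs hp
  exact ⟨hs, hp⟩

lemma fejer_exists : ∃ (f : ℝ → ℂ) (h : ℝ → ℝ) (c d : ℝ), HasCompactSupport f ∧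
    ContDiff ℝ ((⊤ : ℕ∞) : WithTop ℕ∞) f ∧ 0 < c ∧ 0 < d ∧ (∀ x, 0 ≤ h x) ∧
    (∀ x, |x| ≤ d → c ≤ h x) ∧
    ∀ x : ℝ, ∫ v : ℝ, Complex.exp (-2 * Real.pi * Complex.I * v * x) * f v = h x := by
  let η : ContDiffBump (0:ℝ) := ⟨1, 2, by norm_num, by norm_num⟩
  let e : ℝ → ℂ := fun x => ((η x : ℝ) : ℂ)
  have he1 : HasCompactSupport e := η.hasCompactSupport.comp_left (g := fun x : ℝ => (x:ℂ)) (by simp)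
  have he2 : ContDiff ℝ ((⊤ : ℕ∞) : WithTop ℕ∞) e := Complex.ofRealCLM.contDiff.comp η.contDiff
  have hei : Integrable e := he2.continuous.integrable_of_hasCompactSupport he1
  let k : ℝ → ℂ := FourierTransform.fourier e
  have hk : ∀ x : ℝ, k x = ∫ v : ℝ, Complex.exp (-2 * Real.pi * Complex.I * v * x) * e v := by
    intro x
    show FourierTransform.fourier e x = _
    rw [Real.fourier_real_eq_integral_exp_smul]
    refine integral_congr_ae (Eventually.of_forall fun v => ?_)
    simp only [smul_eq_mul]
    congr 2
    push_cast
    ring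
  have hkreal : ∀ x, (starRingEnd ℂ) (k x) = k x := by
    intro x
    rw [hk, ← integral_conj, ← integral_neg_eq_self]
    refine integral_congr_ae (Eventually.of_forall fun v => ?_)
    simp only [map_mul, e, Complex.conj_ofReal, ← Complex.exp_conj, η.neg]
    congr 2
    simp only [map_neg, map_mul, map_ofNat, Complex.conj_ofReal, Complex.conj_I, Complex.ofReal_neg]
    ring
  have hkcont : Continuous k := VectorFourier.fourierIntegral_continuous Real.continuous_fourierChar
      (by exact continuous_inner) hei
  have hkre : ∀ x, k x = ((k x).re : ℂ) := fun x => (Complex.conj_eq_iff_re.mp (hkreal x)).symm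
  have hk0 : 0 < (k 0).re := by
    have h0 : k 0 = ((∫ v, η v : ℝ) : ℂ) := by
      rw [hk, ← integral_complex_ofReal]
      refine integral_congr_ae (Eventually.of_forall fun v => ?_)
      simp [e]
    rw [h0, Complex.ofReal_re]
    exact η.integral_pos
  obtain ⟨d, hd, hdd⟩ : ∃ d > 0, ∀ x : ℝ, |x| < d → (k 0).re / 2 < (k x).re := by
    have : ∀ᶠ x in 𝓝 (0:ℝ), (k 0).re / 2 < (k x).re :=
      (Complex.continuous_re.comp hkcont).continuousAt.eventually (lt_mem_nhds (by simp; linarith))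
    obtain ⟨d, hd, h⟩ := Metric.eventually_nhds_iff.mp this
    exact ⟨d, hd, fun x hx => h (by simpa [Real.dist_eq] using hx)⟩
  refine ⟨MeasureTheory.convolution e e (ContinuousLinearMap.mul ℂ ℂ) volume, fun x => (k x).re ^ 2, ((k 0).re / 2) ^ 2, d / 2,
    he1.convolution _ he1, ?_, by positivity, by positivity, fun x => sq_nonneg _, ?_, ?_⟩
  · have := he1.contDiff_convolution_left (ContinuousLinearMap.mul ℝ ℂ) (μ := volume) he2 hei.locallyIntegrable
    exact this
  · intro x hx
    have := hdd x (by linarith)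
    exact pow_le_pow_left₀ (by positivity) this.le 2
  · intro x
    have := Real.fourier_mul_convolution_eq hei hei x
    rw [Real.fourier_real_eq_integral_exp_smul] at this
    have h2 : FourierTransform.fourier e x = ((k x).re : ℂ) := hkre x
    rw [h2] at this
    push_cast
    rw [sq, ← this]
    refine integral_congr_ae (Eventually.of_forall fun v => ?_)
    simp only [smul_eq_mul]
    congr 2
    push_cast
    ring
lemma nu_summable {ν : PPM ℝ} (hν : ν.locFinite) {g : ℝ → ℂ} (M r : ℝ) (hM : ∀ x, ‖g x‖ ≤ M)
    (hr : ∀ x, r ≤ |x| → g x = 0) : Summable fun x => ‖ν.mass x * g x‖ := by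
  have h := hν r
  unfold PPM.var at h
  have h1 : Summable fun x : ball (0:ℝ) r => ‖ν.mass x‖ := by
    have := ENNReal.tsum_coe_ne_top_iff_summable.mp h.ne
    exact NNReal.summable_coe.mpr this
  have h2 : Summable ((ball (0:ℝ) r).indicator fun x => ‖ν.mass x‖) :=
    (summable_subtype_iff_indicator (f := fun x => ‖ν.mass x‖) (s := ball (0:ℝ) r)).mp h1
  refine Summable.of_nonneg_of_le (fun _ => norm_nonneg _) (fun x => ?_) (h2.mul_left M)
  rw [norm_mul]
  by_cases hx : x ∈ ball (0:ℝ) r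
  · rw [Set.indicator_of_mem hx, mul_comm]
    gcongr
    exact hM x
  · rw [hr x (by simpa [Real.dist_eq] using hx)]
    simp [Set.indicator_of_notMem hx]

lemma bounded_of_compact {f : ℝ → ℂ} (h1 : HasCompactSupport f) (h2 : Continuous f) :
    ∃ M r : ℝ, (∀ x, ‖f x‖ ≤ M) ∧ ∀ x, r ≤ |x| → f x = 0 := by
  obtain ⟨M, hM⟩ := h1.exists_bound_of_continuous h2
  obtain ⟨r, hr⟩ := h1.isCompact.isBounded.subset_ball (0:ℝ)
  refine ⟨M, r, hM, fun x hx => ?_⟩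
  by_contra h
  have : x ∈ tsupport f := subset_tsupport f h
  have := hr this
  simp [Real.dist_eq] at this
  linarith

lemma mass_near {μ ν : PPM ℝ} (hnat : μ.natValued) (ht : μ.temperate) (hν : ν.locFinite)
    (hF : IsFT μ ν) : ∃ d K : ℝ, 0 < d ∧ ∀ t : ℝ,
      ∑' x : ℝ, (if |x - t| ≤ d then ENNReal.ofReal ‖μ.mass x‖ else 0) ≤ ENNReal.ofReal K := by
  obtain ⟨f, h, c, d, hf1, hf2, hc, hd, hh, hhc, hfh⟩ := fejer_exists
  obtain ⟨M, r, hM, hr⟩ := bounded_of_compact hf1 hf2.continuous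
  have hK := nu_summable hν M r hM hr
  refine ⟨d, (∑' x, ‖ν.mass x * f x‖) / c, hd, fun t => ?_⟩
  have hmass : ∀ x, μ.mass x = (‖μ.mass x‖ : ℂ) := by
    intro x
    obtain ⟨k, hk⟩ := hnat x
    rw [hk]; simp
  let ft : ℝ → ℂ := fun v => Complex.exp (2 * Real.pi * Complex.I * v * t) * f v
  have hft1 : HasCompactSupport ft := hf1.mul_left
  have hft2 : ContDiff ℝ ((⊤ : ℕ∞) : WithTop ℕ∞) ft := by
    refine ContDiff.mul ?_ hf2
    refine ContDiff.cexp ?_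
    refine ContDiff.mul (ContDiff.mul contDiff_const Complex.ofRealCLM.contDiff) contDiff_const
  obtain ⟨hs, hp⟩ := test_pair ht hF hft1 hft2
  have hInt : ∀ x : ℝ, ∫ v : ℝ, Complex.exp (-2 * Real.pi * Complex.I * v * x) * ft v = h (x - t) := by
    intro x
    rw [← hfh]
    refine integral_congr_ae (Eventually.of_forall fun v => ?_)
    simp only [ft]
    rw [← mul_assoc, ← Complex.exp_add]
    congr 2
    push_cast
    ring
  have hnn : ∀ x, 0 ≤ ‖μ.mass x‖ * h (x - t) := fun x => mul_nonneg (norm_nonneg _) (hh _)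
  have hterm : ∀ x : ℝ, μ.mass x * ∫ v : ℝ, Complex.exp (-2 * Real.pi * Complex.I * v * x) * ft v =
      ((‖μ.mass x‖ * h (x - t) : ℝ) : ℂ) := by
    intro x
    rw [hInt]
    conv_lhs => rw [hmass]
    push_cast; rfl
  simp only [hterm] at hs hp
  have hsr : Summable fun x => ‖μ.mass x‖ * h (x - t) := by exact_mod_cast hs
  have hle : ∑' x, ‖μ.mass x‖ * h (x - t) ≤ ∑' x, ‖ν.mass x * f x‖ := by
    rw [← Complex.ofReal_tsum] at hp
    have h3 : ∑' x, ‖μ.mass x‖ * h (x - t) = ‖∑' g, ν.mass g * ft g‖ := by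
      rw [← hp, Complex.norm_real, Real.norm_of_nonneg (tsum_nonneg hnn)]
    have hn : ∀ g, ‖ν.mass g * ft g‖ = ‖ν.mass g * f g‖ := by
      intro g
      simp only [ft]
      rw [norm_mul, norm_mul, norm_mul, Complex.norm_exp]
      simp
    rw [h3]
    refine (norm_tsum_le_tsum_norm ?_).trans (le_of_eq (tsum_congr hn))
    simpa only [hn] using hK
  calc ∑' x : ℝ, (if |x - t| ≤ d then ENNReal.ofReal ‖μ.mass x‖ else 0)
      ≤ ∑' x : ℝ, ENNReal.ofReal ((‖μ.mass x‖ * h (x - t)) / c) := by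
        refine ENNReal.tsum_le_tsum fun x => ?_
        split_ifs with hx
        · apply ENNReal.ofReal_le_ofReal
          rw [le_div_iff₀ hc]
          exact mul_le_mul_of_nonneg_left (hhc _ hx) (norm_nonneg _)
        · exact zero_le
    _ = ENNReal.ofReal (∑' x, (‖μ.mass x‖ * h (x - t)) / c) :=
        (ENNReal.ofReal_tsum_of_nonneg (fun x => div_nonneg (hnn x) hc.le) (hsr.div_const c)).symm
    _ ≤ _ := by
        apply ENNReal.ofReal_le_ofReal
        rw [tsum_div_const]
        gcongr

lemma mass_summable {μ ν : PPM ℝ} (hnat : μ.natValued) (ht : μ.temperate) (hν : ν.locFinite)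
    (hF : IsFT μ ν) : Summable fun x : ℝ => ‖μ.mass x‖ / (1 + x ^ 2) := by
  obtain ⟨d, K, hd, hK⟩ := mass_near hnat ht hν hF
  have hW : Summable fun k : ℤ => (2 + 2 * d ^ 2) / (1 + (k * d) ^ 2) := by
    have h0 : Summable fun k : ℤ => (2 + 2 * d ^ 2) * ((1 / d ^ 2) * (1 / (k:ℝ) ^ 2) + (Pi.single (0:ℤ) (1:ℝ) : ℤ → ℝ) k) := by
      refine Summable.mul_left _ (((Real.summable_one_div_int_pow.mpr (by norm_num)).mul_left _).add ?_)
      exact (hasSum_pi_single (0:ℤ) (1:ℝ)).summable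
    refine Summable.of_nonneg_of_le (fun k => by positivity) (fun k => ?_) h0
    rw [div_eq_mul_one_div]
    refine mul_le_mul_of_nonneg_left ?_ (by positivity)
    by_cases hk : k = 0
    · simp [hk]
    · have hk' : (k:ℝ) ≠ 0 := by exact_mod_cast hk
      rw [Pi.single_eq_of_ne hk, add_zero]
      have : (1 / d ^ 2) * (1 / (k:ℝ) ^ 2) = 1 / (k * d) ^ 2 := by field_simp
      rw [this]
      apply one_div_le_one_div_of_le (by positivity)
      linarith
  have hkey : ∀ x : ℝ, ENNReal.ofReal (‖μ.mass x‖ / (1 + x ^ 2)) ≤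
      ∑' k : ℤ, ENNReal.ofReal ((2 + 2 * d ^ 2) / (1 + (k * d) ^ 2)) *
        (if |x - k * d| ≤ d then ENNReal.ofReal ‖μ.mass x‖ else 0) := by
    intro x
    refine le_trans ?_ (ENNReal.le_tsum (round (x / d)))
    have hx : |x - round (x / d) * d| ≤ d := by
      have := abs_sub_round (x / d)
      have h2 : x - round (x / d) * d = (x / d - round (x / d)) * d := by field_simp
      rw [h2, abs_mul, abs_of_pos hd]
      nlinarith
    rw [if_pos hx, ← ENNReal.ofReal_mul (by positivity)]
    apply ENNReal.ofReal_le_ofReal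
    rw [div_eq_mul_one_div, mul_comm]
    refine mul_le_mul_of_nonneg_right ?_ (norm_nonneg _)
    rw [div_le_div_iff₀ (by positivity) (by positivity)]
    set y := (round (x / d) : ℝ) * d
    have h3 : (x - y) ^ 2 ≤ d ^ 2 := by rw [← sq_abs]; gcongr
    nlinarith [sq_nonneg (y - 2 * x), sq_nonneg x, sq_nonneg d, mul_nonneg (sq_nonneg d) (sq_nonneg x)]
  have hfin : ∑' x : ℝ, ENNReal.ofReal (‖μ.mass x‖ / (1 + x ^ 2)) < ⊤ := by
    refine lt_of_le_of_lt (ENNReal.tsum_le_tsum hkey) ?_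
    rw [ENNReal.tsum_comm]
    simp only [ENNReal.tsum_mul_left]
    refine lt_of_le_of_lt (ENNReal.tsum_le_tsum fun k => mul_le_mul_right (hK (k * d)) _) ?_
    rw [ENNReal.tsum_mul_right, ← ENNReal.ofReal_tsum_of_nonneg (fun k => by positivity) hW]
    exact ENNReal.mul_lt_top ENNReal.ofReal_lt_top ENNReal.ofReal_lt_top
  have := ENNReal.summable_toReal hfin.ne
  refine this.congr fun x => ?_
  rw [ENNReal.toReal_ofReal (by positivity)]
lemma ramp_exists : ∃ g g1 g2 : ℝ → ℝ, ContDiff ℝ ((⊤ : ℕ∞) : WithTop ℕ∞) g ∧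
    (∀ x, HasDerivAt g (g1 x) x) ∧ (∀ x, HasDerivAt g1 (g2 x) x) ∧ Continuous g2 ∧
    HasCompactSupport g2 ∧ (∀ x, x ≤ 0 → g x = 0) ∧ (∀ x, 1 ≤ x → g x = x) ∧
    ∀ x, |g x| ≤ max x 0 := by
  let g : ℝ → ℝ := fun x => x * Real.smoothTransition x
  have hg : ContDiff ℝ ((⊤ : ℕ∞) : WithTop ℕ∞) g := contDiff_id.mul Real.smoothTransition.contDiff
  have hg0 : ∀ x, x ≤ 0 → g x = 0 := fun x hx => by
    simp [g, Real.smoothTransition.zero_of_nonpos hx]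
  have hg1 : ∀ x, 1 ≤ x → g x = x := fun x hx => by
    simp [g, Real.smoothTransition.one_of_one_le hx]
  have hd1 : ContDiff ℝ ((⊤ : ℕ∞) : WithTop ℕ∞) (deriv g) :=
    (contDiff_infty_iff_deriv.mp hg).2
  have hd2 : ContDiff ℝ ((⊤ : ℕ∞) : WithTop ℕ∞) (deriv (deriv g)) :=
    (contDiff_infty_iff_deriv.mp hd1).2
  refine ⟨g, deriv g, deriv (deriv g), hg,
    fun x => ((contDiff_infty_iff_deriv.mp hg).1 x).hasDerivAt,
    fun x => ((contDiff_infty_iff_deriv.mp hd1).1 x).hasDerivAt, hd2.continuous, ?_, hg0, hg1, ?_⟩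
  · refine HasCompactSupport.intro (isCompact_Icc (a := (0:ℝ)) (b := 1)) fun x hx => ?_
    rw [Set.mem_Icc, not_and_or, not_le, not_le] at hx
    rcases hx with hx | hx
    · have h1 : ∀ y < 0, deriv g y = 0 := by
        intro y hy
        have : g =ᶠ[𝓝 y] fun _ => 0 := by
          filter_upwards [Iio_mem_nhds hy] with w hw using hg0 w (le_of_lt hw)
        rw [this.deriv_eq, deriv_const]
      have : deriv g =ᶠ[𝓝 x] fun _ => 0 := by
        filter_upwards [Iio_mem_nhds hx] with w hw using h1 w hw
      rw [this.deriv_eq, deriv_const]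
    · have h1 : ∀ y, 1 < y → deriv g y = 1 := by
        intro y hy
        have : g =ᶠ[𝓝 y] fun w => w := by
          filter_upwards [Ioi_mem_nhds hy] with w hw using hg1 w (le_of_lt hw)
        rw [this.deriv_eq]
        simp
      have : deriv g =ᶠ[𝓝 x] fun _ => 1 := by
        filter_upwards [Ioi_mem_nhds hx] with w hw using h1 w hw
      rw [this.deriv_eq, deriv_const]
  · intro x
    rcases le_total x 0 with hx | hx
    · rw [hg0 x hx]; simp
    · rw [abs_mul, abs_of_nonneg hx, abs_of_nonneg (Real.smoothTransition.nonneg x)]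
      exact (mul_le_of_le_one_right hx (Real.smoothTransition.le_one x)).trans (le_max_left _ _)

/-- normalised smooth second difference -/
def Bf (g : ℝ → ℝ) (N v : ℝ) : ℝ :=
  (g (N * v) - 2 * g (N * (v - N)) + g (N * (v - 2 * N))) / N

lemma Bf_lim (g : ℝ → ℝ) (hg0 : ∀ x, x ≤ 0 → g x = 0) (hg1 : ∀ x, 1 ≤ x → g x = x) (v : ℝ) :
    ∀ᶠ n : ℕ in atTop, Bf g ((n:ℝ) + 1) v = max v 0 := by
  rcases le_or_gt v 0 with hv | hv
  · refine Eventually.of_forall fun n => ?_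
    have hn : (0:ℝ) < (n:ℝ) + 1 := by positivity
    unfold Bf
    rw [hg0 _ (by nlinarith), hg0 _ (by nlinarith), hg0 _ (by nlinarith), max_eq_right hv]
    simp
  · filter_upwards [tendsto_natCast_atTop_atTop.eventually_ge_atTop (v + 1 / v)] with n hn
    have h0 : (0:ℝ) < 1 / v := by positivity
    have h1 : v < (n:ℝ) + 1 := by linarith
    have h2 : 1 ≤ ((n:ℝ) + 1) * v := by
      have : 1 / v ≤ (n:ℝ) + 1 := by linarith
      rwa [div_le_iff₀ hv] at this
    unfold Bf
    have hp : (0:ℝ) < (n:ℝ) + 1 := by positivity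
    rw [hg1 _ h2, hg0 _ (by nlinarith), hg0 _ (by nlinarith), max_eq_left hv.le]
    field_simp
    ring

lemma Bf_bound (g : ℝ → ℝ) (hgb : ∀ x, |g x| ≤ max x 0) {N : ℝ} (hN : 0 < N) (v : ℝ) :
    |Bf g N v| ≤ 4 * max v 0 := by
  unfold Bf
  rw [abs_div, abs_of_pos hN, div_le_iff₀ hN]
  have h : ∀ a, 0 ≤ a → |g (N * (v - a))| ≤ N * max v 0 := by
    intro a ha
    refine (hgb _).trans ?_
    apply max_le
    · have := le_max_left v 0
      nlinarith
    · have := le_max_right v 0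
      positivity
  have h0 := h 0 le_rfl
  rw [sub_zero] at h0
  have h1 := h N hN.le
  have h2 := h (2 * N) (by positivity)
  rw [abs_le] at *
  constructor <;> linarith [h0.1, h0.2, h1.1, h1.2, h2.1, h2.2]

lemma Bf_supp (g : ℝ → ℝ) (hg0 : ∀ x, x ≤ 0 → g x = 0) (hg1 : ∀ x, 1 ≤ x → g x = x) {N : ℝ}
    (hN : 1 ≤ N) : HasCompactSupport (Bf g N) := by
  refine HasCompactSupport.intro (isCompact_Icc (a := (0:ℝ)) (b := 2 * N + 1)) fun x hx => ?_
  rw [Set.mem_Icc, not_and_or, not_le, not_le] at hx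
  unfold Bf
  rcases hx with hx | hx
  · rw [hg0 _ (by nlinarith), hg0 _ (by nlinarith), hg0 _ (by nlinarith)]
    simp
  · rw [hg1 _ (by nlinarith), hg1 _ (by nlinarith), hg1 _ (by nlinarith)]
    ring

lemma ibp (p : ℂ) {f f' : ℝ → ℂ} (hf : HasCompactSupport f) (hd : ∀ x, HasDerivAt f (f' x) x)
    (hc : Continuous f') : p * ∫ v : ℝ, Complex.exp (p * v) * f v =
      - ∫ v : ℝ, Complex.exp (p * v) * f' v := by
  have hfc : Continuous f := continuous_iff_continuousAt.mpr fun x => (hd x).continuousAt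
  have hf' : HasCompactSupport f' := by
    have : f' = deriv f := by ext x; exact (hd x).deriv.symm
    rw [this]; exact hf.deriv
  have hec : Continuous fun v : ℝ => Complex.exp (p * v) := by fun_prop
  have i1 : Integrable fun v : ℝ => Complex.exp (p * v) * f v :=
    (hec.mul hfc).integrable_of_hasCompactSupport hf.mul_left
  have i2 : Integrable fun v : ℝ => Complex.exp (p * v) * f' v :=
    (hec.mul hc).integrable_of_hasCompactSupport hf'.mul_left
  have hD : ∀ v : ℝ, HasDerivAt (fun v : ℝ => Complex.exp (p * v) * f v)
      (p * (Complex.exp (p * v) * f v) + Complex.exp (p * v) * f' v) v := by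
    intro v
    have h1 : HasDerivAt (fun v : ℝ => p * (v:ℂ)) p v := by
      simpa using (Complex.ofRealCLM.hasDerivAt (x := v)).const_mul p
    have := h1.cexp.mul (hd v)
    refine this.congr_deriv ?_
    ring
  have := integral_eq_zero_of_hasDerivAt_of_integrable hD ((i1.const_mul p).add i2) i1
  rw [integral_add (i1.const_mul p) i2, integral_const_mul] at this
  exact eq_neg_of_add_eq_zero_left this

lemma Bf_fourier_bound (g g1 g2 : ℝ → ℝ) (hd1 : ∀ x, HasDerivAt g (g1 x) x)
    (hd2 : ∀ x, HasDerivAt g1 (g2 x) x) (hc2 : Continuous g2) (hs2 : HasCompactSupport g2)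
    (hg0 : ∀ x, x ≤ 0 → g x = 0) (hg1 : ∀ x, 1 ≤ x → g x = x)  {N : ℝ} (hN : 1 ≤ N) {p : ℂ}
    (hp : p.re ≤ 0) :
    ‖p ^ 2 * ∫ v : ℝ, Complex.exp (p * v) * (Bf g N v : ℂ)‖ ≤ 4 * ∫ v : ℝ, |g2 v| := by
  have hN0 : N ≠ 0 := by linarith
  have hNp : 0 < N := by linarith
  let B1 : ℝ → ℝ := fun v => g1 (N * v) - 2 * g1 (N * (v - N)) + g1 (N * (v - 2 * N))
  let B2 : ℝ → ℝ := fun v => N * g2 (N * v) - 2 * (N * g2 (N * (v - N))) + N * g2 (N * (v - 2 * N))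
  have hlin : ∀ a x : ℝ, HasDerivAt (fun v => N * (v - a)) N x := fun a x => by
    simpa using ((hasDerivAt_id x).sub_const a).const_mul N
  have hlin0 : ∀ x : ℝ, HasDerivAt (fun v => N * v) N x := fun x => by
    simpa using ((hasDerivAt_id x)).const_mul N
  have hB1 : ∀ x, HasDerivAt (Bf g N) (B1 x) x := by
    intro x
    have h := ((((hd1 (N * x)).comp x (hlin0 x)).sub
      (((hd1 (N * (x - N))).comp x (hlin N x)).const_mul 2)).add
      ((hd1 (N * (x - 2 * N))).comp x (hlin (2 * N) x))).div_const N
    refine h.congr_deriv ?_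
    simp only [B1]
    field_simp
  have hB2 : ∀ x, HasDerivAt B1 (B2 x) x := by
    intro x
    have h := ((((hd2 (N * x)).comp x (hlin0 x)).sub
      (((hd2 (N * (x - N))).comp x (hlin N x)).const_mul 2)).add
      ((hd2 (N * (x - 2 * N))).comp x (hlin (2 * N) x)))
    refine h.congr_deriv ?_
    simp only [B2]
    ring
  have hB1c : Continuous B1 := continuous_iff_continuousAt.mpr fun x => (hB2 x).continuousAt
  have hB2c : Continuous B2 := by simp only [B2]; fun_prop
  have hB0s := Bf_supp g hg0 hg1 hN
  have hB1s : HasCompactSupport B1 := by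
    have : B1 = deriv (Bf g N) := by ext x; exact (hB1 x).deriv.symm
    rw [this]; exact hB0s.deriv
  have hB2s : HasCompactSupport B2 := by
    have : B2 = deriv B1 := by ext x; exact (hB2 x).deriv.symm
    rw [this]; exact hB1s.deriv
  have e1 := ibp p (f := fun v => ((Bf g N v : ℝ) : ℂ)) (f' := fun v => ((B1 v : ℝ) : ℂ))
    (hB0s.comp_left (g := fun x : ℝ => (x:ℂ)) (by simp)) (fun x => (hB1 x).ofReal_comp) (by fun_prop)
  have e2 := ibp p (f := fun v => ((B1 v : ℝ) : ℂ)) (f' := fun v => ((B2 v : ℝ) : ℂ))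
    (hB1s.comp_left (g := fun x : ℝ => (x:ℂ)) (by simp)) (fun x => (hB2 x).ofReal_comp) (by fun_prop)
  rw [sq, mul_assoc, e1, mul_neg, e2, neg_neg]
  -- the scaled integrals
  have hg2i : Integrable fun v => |g2 v| := (hc2.integrable_of_hasCompactSupport hs2).abs
  have hsc : ∀ a, Integrable (fun v => N * |g2 (N * (v - a))|) ∧
      ∫ v, N * |g2 (N * (v - a))| = ∫ v, |g2 v| := by
    intro a
    constructor
    · have h1 : Integrable fun v => |g2 (N * v)| := hg2i.comp_mul_left' hN0
      exact (h1.comp_sub_right a).const_mul N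
    · rw [integral_const_mul, integral_sub_right_eq_self (fun v => |g2 (N * v)|) a,
        Measure.integral_comp_mul_left (fun v => |g2 v|) N, abs_inv, abs_of_pos hNp, smul_eq_mul,
        mul_inv_cancel_left₀ hN0]
  have hBle : ∀ v, |B2 v| ≤ N * |g2 (N * (v - 0))| + 2 * (N * |g2 (N * (v - N))|) +
      N * |g2 (N * (v - 2 * N))| := by
    intro v
    simp only [B2, sub_zero]
    refine (abs_add_le _ _).trans (add_le_add ((abs_sub _ _).trans (add_le_add ?_ ?_)) ?_)
    · rw [abs_mul, abs_of_pos hNp]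
    · rw [abs_mul, abs_mul, abs_of_pos hNp, abs_two]
    · rw [abs_mul, abs_of_pos hNp]
  have hB2i : Integrable fun v => |B2 v| := (hB2c.integrable_of_hasCompactSupport hB2s).abs
  have hz : ∀ v, v < 0 → B2 v = 0 := by
    intro v hv
    have h1 : ∀ y < 0, B1 y = 0 := by
      intro y hy
      have : Bf g N =ᶠ[𝓝 y] fun _ => 0 := by
        filter_upwards [Iio_mem_nhds hy] with w hw
        have hw : w < 0 := hw
        unfold Bf
        rw [hg0 _ (by nlinarith), hg0 _ (by nlinarith), hg0 _ (by nlinarith)]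
        simp
      rw [← (hB1 y).deriv, this.deriv_eq, deriv_const]
    have : B1 =ᶠ[𝓝 v] fun _ => 0 := by
      filter_upwards [Iio_mem_nhds hv] with w hw using h1 w hw
    rw [← (hB2 v).deriv, this.deriv_eq, deriv_const]
  calc ‖∫ v : ℝ, Complex.exp (p * v) * (B2 v : ℂ)‖ ≤ ∫ v, |B2 v| := by
        refine norm_integral_le_of_norm_le hB2i (Eventually.of_forall fun v => ?_)
        rw [norm_mul, Complex.norm_real, Real.norm_eq_abs]
        rcases lt_or_ge v 0 with hv | hv
        · rw [hz v hv]; simp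
        · refine mul_le_of_le_one_left (abs_nonneg _) ?_
          rw [Complex.norm_exp, Real.exp_le_one_iff]
          simp only [Complex.mul_re, Complex.ofReal_re, Complex.ofReal_im, mul_zero, sub_zero]
          exact mul_nonpos_of_nonpos_of_nonneg hp hv
    _ ≤ ∫ v, (N * |g2 (N * (v - 0))| + 2 * (N * |g2 (N * (v - N))|) +
      N * |g2 (N * (v - 2 * N))|) := by
        refine integral_mono hB2i ?_ hBle
        exact ((hsc 0).1.add ((hsc N).1.const_mul 2)).add (hsc (2 * N)).1
    _ = 4 * ∫ v : ℝ, |g2 v| := by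
        have h2 : ∫ v, (N * |g2 (N * (v - 0))| + 2 * (N * |g2 (N * (v - N))|) + N * |g2 (N * (v - 2 * N))|) =
            (∫ v, (N * |g2 (N * (v - 0))| + 2 * (N * |g2 (N * (v - N))|))) +
              ∫ v, N * |g2 (N * (v - 2 * N))| :=
          integral_add ((hsc 0).1.add ((hsc N).1.const_mul 2)) (hsc (2 * N)).1
        rw [h2,
          integral_add (hsc 0).1 ((hsc N).1.const_mul 2), integral_const_mul 2, (hsc 0).2, (hsc N).2,
          (hsc (2 * N)).2]
        ring
lemma laplace_ramp {p : ℂ} (hp : p.re < 0) :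
    (Integrable fun v : ℝ => Real.exp (p.re * v) * (4 * max v 0)) ∧
    ∫ v : ℝ, Complex.exp (p * v) * ((max v 0 : ℝ) : ℂ) = 1 / p ^ 2 := by
  have hI : IntegrableOn (fun v : ℝ => v * Real.exp (p.re * v)) (Set.Ioi 0) := by
    have h := integrableOn_rpow_mul_exp_neg_mul_rpow (p := 1) (s := 1) (b := -p.re) (by norm_num)
      one_pos (by linarith)
    simpa only [Real.rpow_one, neg_neg] using h
  constructor
  · have h2 : IntegrableOn (fun v : ℝ => Real.exp (p.re * v) * (4 * max v 0)) (Set.Ioi 0) := by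
      refine IntegrableOn.congr_fun (hI.const_mul 4) (fun v hv => ?_) measurableSet_Ioi
      have hv : 0 < v := hv
      simp only [max_eq_left hv.le]
      ring
    refine (integrableOn_iff_integrable_of_support_subset ?_).mp h2
    intro v hv
    by_contra hv2
    have : v ≤ 0 := not_lt.mp hv2
    exact hv (by simp [max_eq_right this])
  · have hp0 : p ≠ 0 := by rintro rfl; simp at hp
    have hc1 : Continuous fun v : ℝ => (v:ℂ) * Complex.exp (p * v) := by fun_prop
    have hI1 : IntegrableOn (fun v : ℝ => (v:ℂ) * Complex.exp (p * v)) (Set.Ioi 0) := by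
      refine Integrable.mono' hI hc1.aestronglyMeasurable ?_
      filter_upwards [ae_restrict_mem measurableSet_Ioi] with v hv
      have hv : 0 < v := hv
      rw [norm_mul, Complex.norm_exp, Complex.norm_real, Real.norm_of_nonneg hv.le]
      simp
    have hI2 := integrableOn_exp_mul_complex_Ioi hp 0
    have hD : ∀ v : ℝ, HasDerivAt (fun v : ℝ => (1 / p) * ((v:ℂ) * Complex.exp (p * v)) -
        (1 / p ^ 2) * Complex.exp (p * v)) ((v:ℂ) * Complex.exp (p * v)) v := by
      intro v
      have h0 : HasDerivAt (fun v : ℝ => (v:ℂ)) 1 v := Complex.ofRealCLM.hasDerivAt (x := v)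
      have h1 : HasDerivAt (fun v : ℝ => p * (v:ℂ)) p v := by
        simpa using h0.const_mul p
      have := ((h0.mul h1.cexp).const_mul (1 / p)).sub (h1.cexp.const_mul (1 / p ^ 2))
      refine this.congr_deriv ?_
      field_simp
      ring
    have hlim := tendsto_zero_of_hasDerivAt_of_integrableOn_Ioi (a := 0) (fun v _ => hD v) hI1
      ((hI1.const_mul _).sub (hI2.const_mul _))
    have h := integral_Ioi_of_hasDerivAt_of_tendsto' (a := 0) (fun v _ => hD v) hI1 hlim
    rw [← setIntegral_eq_integral_of_forall_compl_eq_zero (s := Set.Ioi (0:ℝ))]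
    · have h2 : ∫ v in Set.Ioi (0:ℝ), Complex.exp (p * v) * ((max v 0 : ℝ) : ℂ) =
          ∫ v in Set.Ioi (0:ℝ), (v:ℂ) * Complex.exp (p * v) := by
        refine setIntegral_congr_fun measurableSet_Ioi fun v hv => ?_
        have hv : 0 < v := hv
        simp only [max_eq_left hv.le]
        rw [mul_comm]
      rw [h2, h]
      simp
    · intro v hv
      have : v ≤ 0 := not_lt.mp hv
      simp [max_eq_right this]

lemma one_add_sq_le {z : ℂ} (hz : 0 < z.im) : ∃ C : ℝ, 0 ≤ C ∧ ∀ x : ℝ, 1 + x ^ 2 ≤ C * ‖z - x‖ ^ 2 := by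
  refine ⟨2 + (1 + 2 * ‖z‖ ^ 2) / z.im ^ 2, by positivity, fun x => ?_⟩
  have h1 : z.im ^ 2 ≤ ‖z - x‖ ^ 2 := by
    rw [Complex.sq_norm, Complex.normSq_apply]
    simp
    nlinarith [sq_nonneg (z.re - x)]
  have h2 : |x| ≤ ‖z - x‖ + ‖z‖ := by
    have := norm_sub_le z (z - x)
    simp at this
    linarith
  have h3 : x ^ 2 ≤ 2 * ‖z - x‖ ^ 2 + 2 * ‖z‖ ^ 2 := by
    rw [← sq_abs]
    nlinarith [sq_nonneg (‖z - x‖ - ‖z‖), abs_nonneg x, norm_nonneg (z - x), norm_nonneg z]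
  have h4 : 1 + 2 * ‖z‖ ^ 2 ≤ (1 + 2 * ‖z‖ ^ 2) / z.im ^ 2 * ‖z - x‖ ^ 2 := by
    rw [div_mul_eq_mul_div, le_div_iff₀ (by positivity)]
    gcongr
  nlinarith

lemma series_formula {μ ν : PPM ℝ} (hnat : μ.natValued) (ht : μ.temperate) (hν : ν.locFinite)
    (hF : IsFT μ ν) {z : ℂ} (hz : 0 < z.im)
    (hs : Summable fun g : ℝ => ‖ν.mass g‖ * max g 0 * ‖ee g z‖) :
    ∑' x : ℝ, μ.mass x * (1 / (2 * Real.pi * Complex.I * (z - x)) ^ 2) =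
      ∑' g : ℝ, ν.mass g * (((max g 0 : ℝ) : ℂ) * ee g z) := by
  obtain ⟨g, g1, g2, hg, hd1, hd2, hc2, hs2, hg0, hg1, hgb⟩ := ramp_exists
  have hm := mass_summable hnat ht hν hF
  obtain ⟨C, hC0, hC⟩ := one_add_sq_le hz
  set L := ∫ v : ℝ, |g2 v| with hL
  have hL0 : 0 ≤ L := integral_nonneg fun v => abs_nonneg _
  let p : ℝ → ℂ := fun x => 2 * Real.pi * Complex.I * (z - x)
  have hpre : ∀ x, (p x).re = -(2 * Real.pi * z.im) := by intro x; simp [p]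
  have hpneg : ∀ x, (p x).re < 0 := by
    intro x; rw [hpre]; have := Real.pi_pos; nlinarith [mul_pos this hz]
  have hpn : ∀ x, ‖p x‖ = 2 * Real.pi * ‖z - x‖ := by
    intro x
    simp only [p, norm_mul, Complex.norm_I, Complex.norm_real, Real.norm_eq_abs, abs_of_pos Real.pi_pos,
      Complex.norm_ofNat, mul_one]
  have hzx : ∀ x : ℝ, 0 < ‖z - x‖ := by
    intro x
    rw [norm_pos_iff]
    intro h
    have := congrArg Complex.im h
    simp at this
    linarith
  let N : ℕ → ℝ := fun n => (n:ℝ) + 1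
  have hN1 : ∀ n, 1 ≤ N n := fun n => by simp [N]
  have hN0 : ∀ n, 0 < N n := fun n => by linarith [hN1 n]
  let f : ℕ → ℝ → ℂ := fun n v => ((Bf g (N n) v : ℝ) : ℂ) * ee v z
  have hf1 : ∀ n, HasCompactSupport (f n) := fun n =>
    ((Bf_supp g hg0 hg1 (hN1 n)).comp_left (g := fun x : ℝ => (x:ℂ)) (by simp)).mul_right
  have hBf : ∀ n, ContDiff ℝ ((⊤ : ℕ∞) : WithTop ℕ∞) (Bf g (N n)) := by
    intro n
    unfold Bf
    fun_prop
  have hf2 : ∀ n, ContDiff ℝ ((⊤ : ℕ∞) : WithTop ℕ∞) (f n) := by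
    intro n
    refine ContDiff.mul (Complex.ofRealCLM.contDiff.comp (hBf n)) ?_
    unfold ee
    exact ContDiff.cexp (contDiff_const.mul Complex.ofRealCLM.contDiff)
  have hpair := fun n => (test_pair ht hF (hf1 n) (hf2 n)).2
  let I : ℕ → ℝ → ℂ := fun n x => ∫ v : ℝ, Complex.exp (p x * v) * ((Bf g (N n) v : ℝ) : ℂ)
  have hI : ∀ n (x : ℝ), ∫ v : ℝ, Complex.exp (-2 * Real.pi * Complex.I * v * x) * f n v = I n x := by
    intro n x
    refine integral_congr_ae (Eventually.of_forall fun v => ?_)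
    simp only [f, ee, p]
    rw [mul_comm ((Bf g (N n) v : ℝ) : ℂ), ← mul_assoc, ← Complex.exp_add]
    congr 2
    ring
  simp only [hI] at hpair
  have hIlim : ∀ x, Tendsto (fun n => I n x) atTop (𝓝 (1 / (p x) ^ 2)) := by
    intro x
    obtain ⟨hInt, hval⟩ := laplace_ramp (hpneg x)
    rw [← hval]
    refine tendsto_integral_of_dominated_convergence _ (fun n => ?_) hInt (fun n => ?_) ?_
    · refine Continuous.aestronglyMeasurable ?_
      have := (hBf n).continuous
      fun_prop
    · refine Eventually.of_forall fun v => ?_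
      rw [norm_mul, Complex.norm_exp, Complex.norm_real, Real.norm_eq_abs]
      have h1 : (p x * (v:ℂ)).re = (p x).re * v := by simp
      rw [h1]
      gcongr
      exact Bf_bound g hgb (hN0 n) v
    · refine Eventually.of_forall fun v => ?_
      refine tendsto_const_nhds.congr' ?_
      filter_upwards [Bf_lim g hg0 hg1 v] with n hn
      rw [hn]
  have hIb : ∀ n x, ‖I n x‖ ≤ (4 * L * C) / (1 + x ^ 2) := by
    intro n x
    have h := Bf_fourier_bound g g1 g2 hd1 hd2 hc2 hs2 hg0 hg1 (hN1 n) (hpneg x).le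
    rw [norm_mul, norm_pow, hpn] at h
    rw [le_div_iff₀ (by positivity)]
    have h1 : ‖z - x‖ ^ 2 ≤ (2 * Real.pi * ‖z - x‖) ^ 2 := by
      have := Real.pi_gt_three
      have := (hzx x).le
      gcongr
      nlinarith
    have hn : 0 ≤ ‖I n x‖ := norm_nonneg _
    calc ‖I n x‖ * (1 + x ^ 2) ≤ ‖I n x‖ * (C * (2 * Real.pi * ‖z - x‖) ^ 2) := by
          gcongr
          exact (hC x).trans (by gcongr)
      _ = C * ((2 * Real.pi * ‖z - x‖) ^ 2 * ‖I n x‖) := by ring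
      _ ≤ C * (4 * L) := by gcongr
      _ = _ := by ring
  have hl : Tendsto (fun n => ∑' x, μ.mass x * I n x) atTop (𝓝 (∑' x, μ.mass x * (1 / (p x) ^ 2))) := by
    refine tendsto_tsum_of_dominated_convergence (hm.mul_left (4 * L * C)) (fun x => (hIlim x).const_mul _)
      (Eventually.of_forall fun n x => ?_)
    rw [norm_mul]
    calc _ ≤ ‖μ.mass x‖ * ((4 * L * C) / (1 + x ^ 2)) := by gcongr; exact hIb n x
      _ = _ := by ring
  have hr : Tendsto (fun n => ∑' x, ν.mass x * f n x) atTop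
      (𝓝 (∑' x, ν.mass x * (((max x 0 : ℝ) : ℂ) * ee x z))) := by
    refine tendsto_tsum_of_dominated_convergence (hs.mul_left 4) (fun x => ?_)
      (Eventually.of_forall fun n x => ?_)
    · refine tendsto_const_nhds.congr' ?_
      filter_upwards [Bf_lim g hg0 hg1 x] with n hn
      simp only [f, N, hn]
    · rw [norm_mul, norm_mul, Complex.norm_real, Real.norm_eq_abs]
      calc _ ≤ ‖ν.mass x‖ * (4 * max x 0 * ‖ee x z‖) := by
            gcongr; exact Bf_bound g hgb (hN0 n) x
        _ = _ := by ring
  simp only [hpair] at hl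
  exact tendsto_nhds_unique hl hr
/-! ### Part C: the exponent series -/

lemma coeff_summable {ν : PPM ℝ} (hν : ν.locFinite)
    (h1 : ∑' γ : (Set.Ioo (0:ℝ) 1), (‖ν.mass γ‖₊ : ℝ≥0∞) / ENNReal.ofReal (γ : ℝ) < ⊤)
    (h2 : ∃ C : ℝ, ∀ᶠ r : ℝ in atTop,
      ν.var (ball (0:ℝ) r) ≤ ENNReal.ofReal (Real.exp (C * r))) :
    ∃ s : ℝ, 0 < s ∧ Summable fun g : ℝ =>
      ‖(if 0 < g then ν.mass g / g else 0 : ℂ)‖ * Real.exp (-(2 * Real.pi * s * g)) := by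
  obtain ⟨C, hC⟩ := h2
  obtain ⟨R, hR⟩ := eventually_atTop.mp hC
  set B : ℝ := |C| + 1 with hB
  have hB1 : 1 ≤ B := by have := abs_nonneg C; linarith
  have hpi := Real.pi_pos
  set v0 := ν.var (ball (0:ℝ) R) with hv0
  have hind : ∀ r, ν.var (ball (0:ℝ) r) = ∑' x, (ball (0:ℝ) r).indicator (fun x => (‖ν.mass x‖₊ : ℝ≥0∞)) x := by
    intro r
    unfold PPM.var
    exact tsum_subtype (ball (0:ℝ) r) (fun x => (‖ν.mass x‖₊ : ℝ≥0∞))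
  have hvar : ∀ r : ℝ, 0 ≤ r → ν.var (ball (0:ℝ) r) ≤ v0 + ENNReal.ofReal (Real.exp (|C| * r)) := by
    intro r hr
    rcases le_total R r with h | h
    · refine (hR r h).trans (le_trans ?_ le_add_self)
      apply ENNReal.ofReal_le_ofReal
      have := le_abs_self C
      gcongr
    · refine le_trans ?_ le_self_add
      rw [hv0, hind, hind]
      refine ENNReal.tsum_le_tsum fun x => ?_
      exact Set.indicator_le_indicator_of_subset (ball_subset_ball h) (fun _ => zero_le) x
  refine ⟨B / (2 * Real.pi), by positivity, ?_⟩
  have hexp : ∀ g : ℝ, Real.exp (-(2 * Real.pi * (B / (2 * Real.pi)) * g)) = Real.exp (-(B * g)) := by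
    intro g; congr 2; field_simp
  simp only [hexp]
  have hkey : ∀ g : ℝ, ENNReal.ofReal (‖(if 0 < g then ν.mass g / g else 0 : ℂ)‖ * Real.exp (-(B * g))) ≤
      (Set.Ioo (0:ℝ) 1).indicator (fun g => (‖ν.mass g‖₊ : ℝ≥0∞) / ENNReal.ofReal g) g +
      ∑' n : ℕ, ENNReal.ofReal (Real.exp (-(B * n))) *
        (ball (0:ℝ) ((n:ℝ) + 1)).indicator (fun x => (‖ν.mass x‖₊ : ℝ≥0∞)) g := by
    intro g
    by_cases hg : 0 < g
    · rw [if_pos hg]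
      rcases lt_or_ge g 1 with hg1 | hg1
      · refine le_trans ?_ le_self_add
        rw [Set.indicator_of_mem (show g ∈ Set.Ioo (0:ℝ) 1 from ⟨hg, hg1⟩)]
        have h3 : (‖ν.mass g‖₊ : ℝ≥0∞) = ENNReal.ofReal ‖ν.mass g‖ := (ofReal_norm_eq_enorm _).symm
        rw [h3, ← ENNReal.ofReal_div_of_pos hg]
        apply ENNReal.ofReal_le_ofReal
        rw [norm_div, Complex.norm_real, Real.norm_of_nonneg hg.le]
        refine mul_le_of_le_one_right (by positivity) ?_
        rw [Real.exp_le_one_iff]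
        have : 0 ≤ B * g := by positivity
        linarith
      · refine le_trans ?_ le_add_self
        refine le_trans ?_ (ENNReal.le_tsum ⌊g⌋₊)
        have hmem : g ∈ ball (0:ℝ) ((⌊g⌋₊:ℝ) + 1) := by
          simp only [mem_ball, dist_zero_right, Real.norm_eq_abs, abs_of_pos hg]
          exact Nat.lt_floor_add_one g
        rw [Set.indicator_of_mem hmem]
        have h3 : (‖ν.mass g‖₊ : ℝ≥0∞) = ENNReal.ofReal ‖ν.mass g‖ := (ofReal_norm_eq_enorm _).symm
        rw [h3, ← ENNReal.ofReal_mul (by positivity), mul_comm]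
        apply ENNReal.ofReal_le_ofReal
        have hfl := Nat.floor_le hg.le
        rw [norm_div, Complex.norm_real, Real.norm_of_nonneg hg.le]
        have : ‖ν.mass g‖ / g ≤ ‖ν.mass g‖ := div_le_self (norm_nonneg _) hg1
        gcongr
    · rw [if_neg hg]; simp
  have hfin : ∑' g : ℝ, ENNReal.ofReal (‖(if 0 < g then ν.mass g / g else 0 : ℂ)‖ * Real.exp (-(B * g))) < ⊤ := by
    refine lt_of_le_of_lt (ENNReal.tsum_le_tsum hkey) ?_
    rw [ENNReal.tsum_add]
    refine ENNReal.add_lt_top.mpr ⟨?_, ?_⟩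
    · rw [← tsum_subtype (Set.Ioo (0:ℝ) 1) (fun g => (‖ν.mass g‖₊ : ℝ≥0∞) / ENNReal.ofReal g)]
      exact h1
    · rw [ENNReal.tsum_comm]
      simp only [ENNReal.tsum_mul_left, ← hind]
      have hle : ∀ n : ℕ, ENNReal.ofReal (Real.exp (-(B * n))) * ν.var (ball (0:ℝ) ((n:ℝ) + 1)) ≤
          ENNReal.ofReal (Real.exp (-(n:ℝ))) * (v0 + ENNReal.ofReal (Real.exp |C|)) := by
        intro n
        have hn : (0:ℝ) ≤ n := Nat.cast_nonneg n
        refine (mul_le_mul_right (hvar _ (by positivity)) _).trans ?_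
        rw [mul_add, mul_add (ENNReal.ofReal (Real.exp (-(n:ℝ)))), ← ENNReal.ofReal_mul (by positivity), ← ENNReal.ofReal_mul (by positivity),
          ← Real.exp_add, ← Real.exp_add]
        refine add_le_add (mul_le_mul_left (ENNReal.ofReal_le_ofReal (Real.exp_le_exp.mpr ?_)) _)
          (ENNReal.ofReal_le_ofReal (Real.exp_le_exp.mpr ?_))
        · nlinarith
        · rw [hB]; linarith
      refine lt_of_le_of_lt (ENNReal.tsum_le_tsum hle) ?_
      rw [ENNReal.tsum_mul_right, ← ENNReal.ofReal_tsum_of_nonneg (fun n => by positivity)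
        Real.summable_exp_neg_nat]
      exact ENNReal.mul_lt_top ENNReal.ofReal_lt_top
        (ENNReal.add_lt_top.mpr ⟨hν R, ENNReal.ofReal_lt_top⟩)
  have := ENNReal.summable_toReal hfin.ne
  refine this.congr fun x => ?_
  rw [ENNReal.toReal_ofReal (by positivity)]

/-- the function given by a generalised Dirichlet series -/
def DS (c : ℝ → ℂ) (z : ℂ) : ℂ := ∑' g : ℝ, c g * ee g z

lemma DS_coeff {c : ℝ → ℂ} (hc : ∀ g, g ≤ 0 → c g = 0) {s : ℝ}
    (hs : Summable fun g => ‖c g‖ * Real.exp (-(2 * Real.pi * s * g))) :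
    Summable fun g : ℝ => ‖2 * Real.pi * Complex.I * g * c g‖ * Real.exp (-(2 * Real.pi * (s + 1) * g)) := by
  refine Summable.of_nonneg_of_le (fun g => by positivity) (fun g => ?_) hs
  rcases le_or_gt g 0 with hg | hg
  · simp [hc g hg]
  · have h1 : ‖2 * Real.pi * Complex.I * g * c g‖ = 2 * Real.pi * g * ‖c g‖ := by
      simp only [norm_mul, Complex.norm_I, Complex.norm_real, Real.norm_eq_abs, abs_of_pos Real.pi_pos,
        Complex.norm_ofNat, mul_one, abs_of_pos hg]
    have h2 : Real.exp (-(2 * Real.pi * (s + 1) * g)) =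
        Real.exp (-(2 * Real.pi * s * g)) * Real.exp (-(2 * Real.pi * g)) := by
      rw [← Real.exp_add]; congr 1; ring
    have h3 : (2 * Real.pi * g) * Real.exp (-(2 * Real.pi * g)) ≤ 1 := by
      rw [Real.exp_neg, mul_inv_le_iff₀ (Real.exp_pos _), one_mul]
      have := Real.add_one_le_exp (2 * Real.pi * g)
      linarith
    rw [h1, h2]
    calc _ = (‖c g‖ * Real.exp (-(2 * Real.pi * s * g))) * ((2 * Real.pi * g) * Real.exp (-(2 * Real.pi * g))) := by ring
      _ ≤ _ := mul_le_of_le_one_right (by positivity) h3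

lemma DS_term_le {c : ℝ → ℂ} (hc : ∀ g, g ≤ 0 → c g = 0) {s : ℝ} {z : ℂ} (hz : s ≤ z.im) (g : ℝ) :
    ‖c g * ee g z‖ ≤ ‖c g‖ * Real.exp (-(2 * Real.pi * s * g)) := by
  rcases le_or_gt g 0 with hg | hg
  · simp [hc g hg]
  · rw [norm_mul, ee_norm]
    have := Real.pi_pos
    gcongr

lemma DS_deriv {c : ℝ → ℂ} (hc : ∀ g, g ≤ 0 → c g = 0) {s : ℝ}
    (hs : Summable fun g => ‖c g‖ * Real.exp (-(2 * Real.pi * s * g))) {z : ℂ} (hz : s < z.im) :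
    HasDerivAt (DS c) (DS (fun g => 2 * Real.pi * Complex.I * g * c g) z) z := by
  have hU : IsOpen {w : ℂ | s < w.im} := isOpen_lt continuous_const Complex.continuous_im
  have hF : ∀ g : ℝ, DifferentiableOn ℂ (fun w => c g * ee g w) {w : ℂ | s < w.im} := fun g =>
    ((ee_diff g).const_mul _).differentiableOn
  have hle : ∀ (g : ℝ) (w : ℂ), w ∈ {w : ℂ | s < w.im} →
      ‖c g * ee g w‖ ≤ ‖c g‖ * Real.exp (-(2 * Real.pi * s * g)) := fun g w hw =>
    DS_term_le hc (le_of_lt hw) g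
  have h1 := Complex.differentiableOn_tsum_of_summable_norm hs hF hU hle
  have h2 := Complex.hasSum_deriv_of_summable_norm hs hF hU hle hz
  have h3 : DifferentiableAt ℂ (DS c) z := h1.differentiableAt (hU.mem_nhds hz)
  refine h3.hasDerivAt.congr_deriv ?_
  have h4 : deriv (DS c) z = ∑' g, deriv (fun w => c g * ee g w) z := h2.tsum_eq.symm
  rw [h4]
  refine tsum_congr fun g => ?_
  have h5 : HasDerivAt (fun w : ℂ => 2 * Real.pi * Complex.I * w * (g:ℂ)) (2 * Real.pi * Complex.I * g) z := by
    simpa using ((hasDerivAt_id z).const_mul (2 * Real.pi * Complex.I)).mul_const (g:ℂ)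
  have h6 : HasDerivAt (fun w => c g * ee g w) (c g * (ee g z * (2 * Real.pi * Complex.I * g))) z :=
    h5.cexp.const_mul (c g)
  rw [h6.deriv]
  ring

lemma const_halfplane {f : ℂ → ℂ} {s : ℝ} (h : ∀ z : ℂ, s < z.im → HasDerivAt f 0 z) :
    ∃ d, ∀ z : ℂ, s < z.im → f z = d := by
  have hU : IsOpen {w : ℂ | s < w.im} := isOpen_lt continuous_const Complex.continuous_im
  have hconv : Convex ℝ {w : ℂ | s < w.im} := convex_halfSpace_im_gt s
  refine ⟨f ((s + 1 : ℝ) * Complex.I), fun z hz => ?_⟩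
  refine hU.is_const_of_deriv_eq_zero hconv.isPreconnected
    (fun w hw => (h w hw).differentiableAt.differentiableWithinAt) (fun w hw => (h w hw).deriv) hz ?_
  simp

lemma half_plane {H : ℂ → ℂ} (hH : Differentiable ℂ H) (hne : ∀ z : ℂ, 0 < z.im → H z ≠ 0)
    {c : ℝ → ℂ} (hc : ∀ g, g ≤ 0 → c g = 0) {s : ℝ} (hs0 : 0 < s)
    (hs : Summable fun g => ‖c g‖ * Real.exp (-(2 * Real.pi * s * g)))
    (hL : ∀ z : ℂ, s + 1 < z.im → HasDerivAt (logDeriv H)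
      (-DS (fun g => 2 * Real.pi * Complex.I * g * (2 * Real.pi * Complex.I * g * c g)) z) z) :
    ∃ d k : ℂ, d ≠ 0 ∧ ∀ z : ℂ, s + 1 < z.im → H z = d * Complex.exp (k * z) * Complex.exp (-DS c z) := by
  have hs' := DS_coeff hc hs
  have hc' : ∀ g : ℝ, g ≤ 0 → 2 * Real.pi * Complex.I * g * c g = 0 := fun g hg => by simp [hc g hg]
  obtain ⟨k, hk⟩ := const_halfplane
    (f := fun z => logDeriv H z + DS (fun g => 2 * Real.pi * Complex.I * g * c g) z) (s := s + 1)
    (fun z hz => ((hL z hz).add (DS_deriv hc' hs' hz)).congr_deriv (neg_add_cancel _))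
  obtain ⟨d, hd⟩ := const_halfplane (f := fun z => H z * Complex.exp (DS c z - k * z)) (s := s + 1)
    (fun z hz => by
      have hz0 : 0 < z.im := by linarith
      have h1 := (DS_deriv hc hs (show s < z.im by linarith)).sub ((hasDerivAt_id z).const_mul k)
      have h2 := (hH z).hasDerivAt.mul h1.cexp
      refine h2.congr_deriv ?_
      have h3 := hk z hz
      have h4 : deriv H z = (k - DS (fun g => 2 * Real.pi * Complex.I * g * c g) z) * H z := by
        rw [← h3, logDeriv_apply]
        field_simp [hne z hz0]
        ring
      rw [h4]
      simp only [id]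
      ring)
  refine ⟨d, k, ?_, fun z hz => ?_⟩
  · rw [← hd ((s + 2 : ℝ) * Complex.I) (by simp)]
    refine mul_ne_zero (hne _ ?_) (Complex.exp_ne_zero _)
    simp; linarith
  · rw [← hd z hz, mul_assoc, mul_assoc, ← Complex.exp_add, ← Complex.exp_add]
    ring_nf
    simp
/-! ### Part D: assembly -/

lemma sig_sum (m : ℝ → ℕ) (f : ℝ → ℂ) (h : Summable fun x => (m x : ℝ) * ‖f x‖) :
    (Summable fun i : (Σ x : ℝ, Fin (m x)) => ‖f i.1‖) ∧
      ∑' i : (Σ x : ℝ, Fin (m x)), f i.1 = ∑' x, (m x : ℂ) * f x := by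
  have h1 : Summable fun i : (Σ x : ℝ, Fin (m x)) => ‖f i.1‖ := by
    rw [summable_sigma_of_nonneg (fun _ => norm_nonneg _)]
    refine ⟨fun x => Summable.of_finite, ?_⟩
    refine h.congr fun x => ?_
    simp [tsum_fintype]
  refine ⟨h1, ?_⟩
  rw [h1.of_norm.tsum_sigma' (fun x => Summable.of_finite)]
  refine tsum_congr fun x => ?_
  simp [tsum_fintype]

lemma ee_sum {n : ℕ} (g : Fin n → ℝ) (z : ℂ) : ee (∑ k, g k) z = ∏ k, ee (g k) z := by
  unfold ee
  rw [← Complex.exp_sum]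
  congr 1
  push_cast
  rw [Finset.mul_sum]

/-- the fibre of the sigma type -/
def fibEquiv (m : ℝ → ℕ) (x : ℝ) : Fin (m x) ≃ {i : (Σ x : ℝ, Fin (m x)) | i.1 = x} where
  toFun k := ⟨⟨x, k⟩, rfl⟩
  invFun i := Fin.cast (by rw [i.2]) i.1.2
  left_inv k := rfl
  right_inv := by
    rintro ⟨⟨y, k⟩, rfl⟩
    rfl

lemma shift_summable {m : ℝ → ℕ} (hm : Summable fun x : ℝ => (m x : ℝ) / (1 + x ^ 2)) (p : ℝ) :
    Summable fun x : ℝ => (m x : ℝ) * ‖(1 / ((x:ℂ) - p) ^ 2 : ℂ)‖ := by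
  have hε : (0:ℝ) < 1 / (1 + (|p| + 1) ^ 2) := by positivity
  refine Summable.of_norm_bounded_eventually (hm.mul_left (3 + 2 * p ^ 2)) ?_
  filter_upwards [hm.tendsto_cofinite_zero.eventually (gt_mem_nhds hε)] with x hx
  have hn : ‖(1 / ((x:ℂ) - p) ^ 2 : ℂ)‖ = 1 / (x - p) ^ 2 := by
    rw [← Complex.ofReal_sub, norm_div, norm_pow, Complex.norm_real, Real.norm_eq_abs, sq_abs]
    simp
  rw [hn, Real.norm_of_nonneg (by positivity)]
  rcases lt_or_ge |x - p| 1 with h | h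
  · have hm0 : m x = 0 := by
      by_contra h0
      have h1 : (1:ℝ) ≤ m x := by exact_mod_cast Nat.one_le_iff_ne_zero.mpr h0
      have h2 : |x| ≤ |p| + 1 := by
        have := abs_sub_abs_le_abs_sub x p
        linarith
      have h3 : x ^ 2 ≤ (|p| + 1) ^ 2 := by rw [← sq_abs]; gcongr
      have h4 : 1 / (1 + (|p| + 1) ^ 2) ≤ (m x : ℝ) / (1 + x ^ 2) := by gcongr
      linarith
    simp [hm0]
  · have h1 : 1 ≤ (x - p) ^ 2 := by rw [← sq_abs]; nlinarith
    have h2 : 1 / (x - p) ^ 2 ≤ (3 + 2 * p ^ 2) / (1 + x ^ 2) := by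
      rw [div_le_div_iff₀ (by positivity) (by positivity)]
      have h3 : x ^ 2 ≤ 2 * (x - p) ^ 2 + 2 * p ^ 2 := by nlinarith [sq_nonneg (x - 2 * p)]
      nlinarith [sq_nonneg p]
    calc _ ≤ (m x : ℝ) * ((3 + 2 * p ^ 2) / (1 + x ^ 2)) := by gcongr
      _ = _ := by ring

lemma DS_mono {c : ℝ → ℂ} (hc : ∀ g, g ≤ 0 → c g = 0) {s t : ℝ} (hst : s ≤ t)
    (hs : Summable fun g => ‖c g‖ * Real.exp (-(2 * Real.pi * s * g))) :
    Summable fun g => ‖c g‖ * Real.exp (-(2 * Real.pi * t * g)) := by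
  refine Summable.of_nonneg_of_le (fun g => by positivity) (fun g => ?_) hs
  rcases le_or_gt g 0 with hg | hg
  · simp [hc g hg]
  · have := Real.pi_pos
    gcongr

/-- the double logarithmic derivative identity in the upper half plane -/
lemma logDeriv_identity {μ ν : PPM ℝ} (hnat : μ.natValued) (ht : μ.temperate) (hν : ν.locFinite)
    (hF : IsFT μ ν) {m : ℝ → ℕ} (hm : ∀ x, μ.mass x = m x) {p : ℝ}
    (hc : ∀ i : (Σ x : ℝ, Fin (m x)), i.1 - p ≠ 0)
    (hs : Summable fun i : (Σ x : ℝ, Fin (m x)) => 1 / (i.1 - p) ^ 2)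
    {s : ℝ} (hs0 : 0 < s) {c : ℝ → ℂ} (hcd : ∀ g, c g = if 0 < g then ν.mass g / g else 0)
    (hcs : Summable fun g => ‖c g‖ * Real.exp (-(2 * Real.pi * s * g))) {z : ℂ} (hz : s + 2 < z.im) :
    HasDerivAt (logDeriv fun z : ℂ => CP (fun i : (Σ x : ℝ, Fin (m x)) => i.1 - p) (z - p))
      (-DS (fun g => 2 * Real.pi * Complex.I * g * (2 * Real.pi * Complex.I * g * c g)) z) z := by
  have hpi : (Real.pi : ℂ) ≠ 0 := by exact_mod_cast Real.pi_pos.ne'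
  set cc : (Σ x : ℝ, Fin (m x)) → ℝ := fun i => i.1 - p with hcc
  have hz0 : 0 < z.im := by linarith
  have hc0 : ∀ g, g ≤ 0 → c g = 0 := fun g hg => by rw [hcd, if_neg (not_lt.mpr hg)]
  have hc0' : ∀ g : ℝ, g ≤ 0 → 2 * Real.pi * Complex.I * g * c g = 0 := fun g hg => by simp [hc0 g hg]
  have hc0'' : ∀ g : ℝ, g ≤ 0 → 2 * Real.pi * Complex.I * g * (2 * Real.pi * Complex.I * g * c g) = 0 :=
    fun g hg => by simp [hc0 g hg]
  have hterm : ∀ g : ℝ, 2 * Real.pi * Complex.I * g * (2 * Real.pi * Complex.I * g * c g) =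
      (2 * Real.pi * Complex.I) ^ 2 * (ν.mass g * ((max g 0 : ℝ) : ℂ)) := by
    intro g
    rcases le_or_gt g 0 with hg | hg
    · simp [hc0 g hg, max_eq_right hg]
    · have hg' : (g:ℂ) ≠ 0 := by exact_mod_cast hg.ne'
      rw [hcd, if_pos hg, max_eq_left hg.le]
      field_simp
  have h2 := DS_coeff hc0' (DS_coeff hc0 hcs)
  have hsum : Summable fun g : ℝ => ‖ν.mass g‖ * max g 0 * ‖ee g z‖ := by
    have h3 : Summable fun g : ℝ => ‖2 * Real.pi * Complex.I * g * (2 * Real.pi * Complex.I * g * c g) * ee g z‖ :=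
      Summable.of_nonneg_of_le (fun _ => norm_nonneg _)
        (fun g => DS_term_le hc0'' (show s + 1 + 1 ≤ z.im by linarith) g) h2
    refine (h3.mul_left (1 / ‖(2 * Real.pi * Complex.I : ℂ) ^ 2‖)).congr fun g => ?_
    rw [hterm, norm_mul, norm_mul, norm_mul, Complex.norm_real, Real.norm_of_nonneg (le_max_right g 0)]
    have h4 : ‖(2 * Real.pi * Complex.I : ℂ) ^ 2‖ ≠ 0 := by
      rw [norm_ne_zero_iff]; simp [hpi]
    field_simp
  have hform := series_formula hnat ht hν hF hz0 hsum
  have hlog : (logDeriv fun z : ℂ => CP cc (z - p)) = fun z => logDeriv (CP cc) (z - p) := by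
    ext w
    rw [logDeriv_apply, logDeriv_apply, deriv_comp_sub_const]
  rw [hlog]
  have hD := CP_logDeriv_deriv hc hs (z := z - p) (by simpa using hz0)
  refine (hD.comp_sub_const z (p:ℂ)).congr_deriv ?_
  have hms : Summable fun x : ℝ => (m x : ℝ) / (1 + x ^ 2) := by
    have := mass_summable hnat ht hν hF
    refine this.congr fun x => ?_
    rw [hm x]; simp
  obtain ⟨C, hC0, hC⟩ := one_add_sq_le hz0
  have hsm : Summable fun x : ℝ => (m x : ℝ) * ‖(-1 / (z - x) ^ 2 : ℂ)‖ := by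
    refine Summable.of_nonneg_of_le (fun x => by positivity) (fun x => ?_) (hms.mul_left C)
    rw [norm_div, norm_neg, norm_one, norm_pow]
    have h5 := hC x
    have h6 : 0 < ‖z - x‖ ^ 2 := by
      by_contra h
      have : ‖z - x‖ ^ 2 = 0 := le_antisymm (not_lt.mp h) (by positivity)
      rw [this] at h5
      nlinarith [sq_nonneg x]
    have h7 : 1 / ‖z - x‖ ^ 2 ≤ C / (1 + x ^ 2) := by
      rw [div_le_div_iff₀ h6 (by positivity)]
      linarith
    calc _ ≤ (m x : ℝ) * (C / (1 + x ^ 2)) := by gcongr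
      _ = _ := by ring
  have hsg := (sig_sum m (fun x => (-1 / (z - x) ^ 2 : ℂ)) hsm).2
  have h8 : ∀ i : (Σ x : ℝ, Fin (m x)), (-1 / (z - p - (cc i : ℂ)) ^ 2 : ℂ) = -1 / (z - i.1) ^ 2 := by
    intro i
    simp only [hcc]
    push_cast
    congr 2
    ring
  refine (tsum_congr h8).trans ?_
  rw [hsg]
  unfold DS
  simp only [hterm, mul_assoc ((2 * Real.pi * Complex.I : ℂ) ^ 2)]
  have h9 : ∀ x : ℝ, (m x : ℂ) * (-1 / (z - x) ^ 2) =
      -((2 * Real.pi * Complex.I) ^ 2 * (μ.mass x * (1 / (2 * Real.pi * Complex.I * (z - x)) ^ 2))) := by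
    intro x
    rw [hm x, mul_pow _ (z - (x:ℂ))]
    have h10 : (2 * Real.pi * Complex.I : ℂ) ^ 2 ≠ 0 := by simp [hpi]
    generalize (2 * Real.pi * Complex.I : ℂ) ^ 2 = a at h10
    field_simp
  rw [tsum_congr h9, tsum_neg, tsum_mul_left, tsum_mul_left, hform]
  simp only [mul_assoc]
/-- **sufficiency in Theorem 5.** Let `A = {a_n} ⊂ ℝ` be a multiset whose
counting measure `μ_A` is a temperate measure whose Fourier transform is a pure point measure
`μ̂_A = Σ_γ b_γ δ_γ` with `Σ_{0<γ<1} |b_γ|/γ < ∞` and `log |μ̂_A|(B(0,r)) = O(r)`. Then `A` is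
the zero multiset (zeros counted with multiplicities, all real) of some Dirichlet series
`Q(z) = Σ_{ω∈Ω} q_ω e^{2πi z ω}` with `Σ|q_ω| < ∞` and bounded countable spectrum `Ω`. -/
theorem statement7 (μ νh : PPM ℝ) (hnat : μ.natValued)
    (hlf : μ.locFinite) (ht : μ.temperate)
    (hνlf : νh.locFinite) (hF : IsFT μ νh)
    (h1 : ∑' γ : (Set.Ioo (0:ℝ) 1), (‖νh.mass γ‖₊ : ℝ≥0∞) / ENNReal.ofReal (γ : ℝ) < ⊤)
    (h2 : ∃ C : ℝ, ∀ᶠ r : ℝ in atTop,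
      νh.var (ball (0:ℝ) r) ≤ ENNReal.ofReal (Real.exp (C * r))) :
    ∃ (q : ℕ → ℂ) (ω : ℕ → ℝ),
      (Summable fun i => ‖q i‖) ∧ IsBounded (Set.range ω) ∧
      (∀ z : ℂ, dserC q ω z = 0 → z.im = 0) ∧
      IsZeroCounting (dserC q ω) μ := by
  choose m hm using hnat
  have hnat' : μ.natValued := fun x => ⟨m x, hm x⟩
  have hms : Summable fun x : ℝ => (m x : ℝ) / (1 + x ^ 2) := by
    refine (mass_summable hnat' ht hνlf hF).congr fun x => ?_
    rw [hm x]; simp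
  obtain ⟨p, hp⟩ := (μ.countable.dense_compl ℝ).nonempty
  have hmp : m p = 0 := by
    have h : μ.mass p = 0 := by simpa using hp
    rw [hm p] at h
    exact_mod_cast h
  have hc : ∀ i : (Σ x : ℝ, Fin (m x)), i.1 - p ≠ 0 := by
    rintro ⟨x, k⟩ h
    have hx : x = p := sub_eq_zero.mp h
    subst hx
    rw [hmp] at k
    exact k.elim0
  have hs : Summable fun i : (Σ x : ℝ, Fin (m x)) => 1 / (i.1 - p) ^ 2 := by
    refine (sig_sum m _ (shift_summable hms p)).1.congr fun i => ?_
    rw [← Complex.ofReal_sub, norm_div, norm_pow, Complex.norm_real, Real.norm_eq_abs, sq_abs]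
    simp
  obtain ⟨s, hs0, hcs⟩ := coeff_summable hνlf h1 h2
  set cf : ℝ → ℂ := fun g => if 0 < g then νh.mass g / g else 0 with hcf
  have hcf0 : ∀ g, g ≤ 0 → cf g = 0 := fun g hg => by rw [hcf]; exact if_neg (not_lt.mpr hg)
  set H : ℂ → ℂ := fun z => CP (fun i : (Σ x : ℝ, Fin (m x)) => i.1 - p) (z - p) with hH
  have hHd : Differentiable ℂ H := (CP_diff hs).comp (differentiable_id.sub_const (p:ℂ))
  have hH0 : ∀ z, H z = 0 → z.im = 0 := by
    intro z hz
    by_contra him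
    refine CP_ne_zero hc hs (z := z - p) (fun i h => him ?_) hz
    have := congrArg Complex.im h
    simpa using this
  obtain ⟨d, k, hd, hHk⟩ := half_plane hHd (fun z hz h => hz.ne' (hH0 z h)) hcf0
    (show 0 < s + 1 by linarith) (DS_mono hcf0 (by linarith) hcs)
    (fun z hz => logDeriv_identity hnat' ht hνlf hF hm hc hs hs0 (c := cf) (fun g => rfl) hcs
      (by linarith))
  -- the normalised function
  set G : ℂ → ℂ := fun z => H z * Complex.exp (-(k.re : ℂ) * z) with hG
  have hGd : Differentiable ℂ G := hHd.mul (by fun_prop)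
  have hGconj : ∀ z, G (starRingEnd ℂ z) = starRingEnd ℂ (G z) := by
    intro z
    have h3 : starRingEnd ℂ z - (p:ℂ) = starRingEnd ℂ (z - p) := by simp
    simp only [hG, hH]
    rw [h3, CP_conj hs, map_mul, ← Complex.exp_conj]
    simp
  set S : ℝ := ∑' i : (Σ x : ℝ, Fin (m x)), 1 / (i.1 - p) ^ 2 with hS
  have hS0 : 0 ≤ S := tsum_nonneg fun i => by positivity
  have hGgr : ∀ z, ‖G z‖ ≤ Real.exp ((3 * S * (2 + 2 * p ^ 2) + |k.re|) * (1 + ‖z‖ ^ 2)) := by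
    intro z
    have h3 := CP_growth hs (z - p)
    have h4 : ‖Complex.exp (-(k.re : ℂ) * z)‖ ≤ Real.exp (|k.re| * ‖z‖) := by
      refine (Complex.norm_exp_le_exp_norm _).trans (le_of_eq ?_)
      rw [norm_mul, norm_neg, Complex.norm_real, Real.norm_eq_abs]
    have h5 : ‖z - p‖ ^ 2 ≤ 2 * ‖z‖ ^ 2 + 2 * p ^ 2 := by
      have h6 := norm_sub_le z (p:ℂ)
      rw [Complex.norm_real, Real.norm_eq_abs] at h6
      rw [← sq_abs p]
      nlinarith [sq_nonneg (‖z‖ - |p|), norm_nonneg (z - p), norm_nonneg z, abs_nonneg p]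
    have h7 : ‖z‖ ≤ 1 + ‖z‖ ^ 2 := by nlinarith [sq_nonneg (‖z‖ - 1), norm_nonneg z]
    have h8 : ‖z - p‖ ^ 2 ≤ (2 + 2 * p ^ 2) * (1 + ‖z‖ ^ 2) := by
      nlinarith [mul_nonneg (sq_nonneg p) (sq_nonneg ‖z‖)]
    simp only [hG]
    rw [norm_mul]
    calc _ ≤ Real.exp (3 * S * ‖z - p‖ ^ 2) * Real.exp (|k.re| * ‖z‖) := by
          gcongr
      _ = Real.exp (3 * S * ‖z - p‖ ^ 2 + |k.re| * ‖z‖) := (Real.exp_add _ _).symm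
      _ ≤ _ := by
          apply Real.exp_le_exp.mpr
          have h9 := mul_le_mul_of_nonneg_left h8 (show 0 ≤ 3 * S by positivity)
          have h10 := mul_le_mul_of_nonneg_left h7 (abs_nonneg k.re)
          linarith
  -- expansion in the half plane
  have hcount : (Function.support cf).Countable := by
    refine νh.countable.mono fun g hg => ?_
    intro h
    apply hg
    simp [hcf, h]
  haveI : Countable (Function.support cf) := hcount.to_subtype
  have hpi := Real.pi_pos
  have hfs : ∀ z : ℂ, s ≤ z.im → Summable fun g : Function.support cf => ‖-(cf g * ee g z)‖ := by
    intro z hz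
    have h3 : Summable fun g : ℝ => ‖-(cf g * ee g z)‖ := by
      simp only [norm_neg]
      exact Summable.of_nonneg_of_le (fun _ => norm_nonneg _) (fun g => DS_term_le hcf0 hz g) hcs
    exact h3.comp_injective Subtype.val_injective
  have hfD : ∀ z : ℂ, ∑' g : Function.support cf, -(cf g * ee g z) = -DS cf z := by
    intro z
    rw [tsum_neg]
    congr 1
    refine tsum_subtype_eq_of_support_subset (f := fun g : ℝ => cf g * ee g z) ?_
    intro g hg h
    exact hg (by simp [h])
  set P : (Σ n : ℕ, (Fin n → Function.support cf)) → ℂ := fun j =>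
    d * ((∏ l, -(cf (j.2 l))) / (j.1.factorial : ℂ)) with hP
  set w : (Σ n : ℕ, (Fin n → Function.support cf)) → ℝ := fun j =>
    k.im / (2 * Real.pi) + ∑ l, ((j.2 l : ℝ)) with hw
  have hPw : ∀ (z : ℂ) (j : (Σ n : ℕ, (Fin n → Function.support cf))), P j * ee (w j) z =
      d * ee (k.im / (2 * Real.pi)) z *
        ((∏ l, -(cf (j.2 l) * ee (j.2 l) z)) / (j.1.factorial : ℂ)) := by
    intro z j
    simp only [hP, hw]
    rw [← ee_mul, ee_sum]
    have h3 : ∏ l, -(cf (j.2 l) * ee (j.2 l) z) = (∏ l, -(cf (j.2 l))) * ∏ l, ee (j.2 l) z := by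
      rw [← Finset.prod_mul_distrib]
      exact Finset.prod_congr rfl fun l _ => by ring
    rw [h3]
    ring
  have hee : ∀ z : ℂ, ee (k.im / (2 * Real.pi)) z = Complex.exp (k.im * Complex.I * z) := by
    intro z
    unfold ee
    congr 1
    push_cast
    have : (Real.pi : ℂ) ≠ 0 := by exact_mod_cast hpi.ne'
    field_simp
  obtain ⟨q, ω, hq, hω, hqG⟩ := F_main hGd (K := 3 * S * (2 + 2 * p ^ 2) + |k.re|) (by positivity)
    hGgr hGconj P w (s := s + 3) (W := |k.im / (2 * Real.pi)|) (by linarith) (abs_nonneg _)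
    (fun j => by
      have h3 := neg_abs_le (k.im / (2 * Real.pi))
      have h4 : 0 ≤ ∑ l, ((j.2 l : ℝ)) := by
        refine Finset.sum_nonneg fun l _ => ?_
        by_contra h
        exact (j.2 l).2 (hcf0 _ (le_of_lt (not_le.mp h)))
      simp only [hw]
      linarith)
    (by
      have hz : s ≤ (((s + 3 : ℝ) : ℂ) * Complex.I).im := by simp
      have h3 := (exp_series (hfs _ hz)).1
      refine (h3.mul_left ‖d * ee (k.im / (2 * Real.pi)) (((s + 3 : ℝ) : ℂ) * Complex.I)‖).congr fun j => ?_
      rw [hPw, norm_mul _ (_ / _)])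
    (fun z hz => by
      have h3 := (exp_series (hfs z (by linarith))).2.tsum_eq
      rw [hfD] at h3
      simp only [hPw]
      rw [tsum_mul_left, h3, hee]
      simp only [hG]
      rw [hHk z (by linarith)]
      have h4 : Complex.exp (k * z) * Complex.exp (-(k.re : ℂ) * z) = Complex.exp (k.im * Complex.I * z) := by
        rw [← Complex.exp_add]
        congr 1
        linear_combination (-z) * Complex.re_add_im k
      rw [← h4]
      ring)
  refine ⟨q, ω, hq, hω, ?_, ?_⟩
  · intro z hz
    rw [hqG] at hz
    rcases mul_eq_zero.mp hz with h | h
    · exact hH0 z h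
    · exact absurd h (Complex.exp_ne_zero _)
  · intro x
    haveI : Fintype {i : (Σ x : ℝ, Fin (m x)) | i.1 = x} := Fintype.ofEquiv _ (fibEquiv m x)
    obtain ⟨g, hgd, hgx, hg⟩ := CP_zero_order hc hs (x - p) {i : (Σ x : ℝ, Fin (m x)) | i.1 = x}
      (fun i => by simp)
    have hcard : Fintype.card {i : (Σ x : ℝ, Fin (m x)) | i.1 = x} = m x := by
      rw [← Fintype.card_congr (fibEquiv m x), Fintype.card_fin]
    rw [hcard] at hg
    refine ⟨m x, fun z => g (z - p) * Complex.exp (-(k.re : ℂ) * z), hm x, ?_, ?_, ?_⟩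
    · have h3 : Differentiable ℂ fun z => g (z - p) * Complex.exp (-(k.re : ℂ) * z) :=
        (hgd.comp (differentiable_id.sub_const (p:ℂ))).mul (by fun_prop)
      exact fun z => h3.analyticAt z
    · refine mul_ne_zero ?_ (Complex.exp_ne_zero _)
      simpa using hgx
    · intro z
      rw [hqG]
      simp only [hG, hH]
      rw [hg (z - p)]
      push_cast
      rw [sub_sub_sub_cancel_right]
      ring


end
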